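/- Let σ be a signature, let r be the maximum arity among all relations in σ, and let k ≥ 1 with r ≤ k. Then for every pair of σ-structures 𝐀, 𝐁 the following are equivalent: (1) 𝐀 ≡_k 𝐁; (2) Hom(𝐐;𝐀) = Hom(𝐐;𝐁) for every σ-structure 𝐐 of treewidth strictly less than k. -/

import Mathlib

attribute [local instance] Classical.propDecidable

set_option maxHeartbeats 1000000

noncomputable section

/-- A relational structure over the signature given by symbols `σ` with arities `ar`,
with universe `A`: for each relation symbol, a set of tuples. -/
structure Struct (σ : Type) (ar : σ → ℕ) (A : Type) : Type where
  rel : ∀ R : σ, Set (Fin (ar R) → A)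

variable {σ : Type} {ar : σ → ℕ}

/-- The set of constraints of a structure: pairs `(R, 𝐚)` with `𝐚 ∈ R(AA)`. -/
def Cons {A : Type} (AA : Struct σ ar A) : Type :=
  Σ R : σ, {u : Fin (ar R) → A // u ∈ AA.rel R}

instance Cons.finite {A : Type} [Finite σ] [Finite A] {AA : Struct σ ar A} :
    Finite (Cons AA) :=
  inferInstanceAs (Finite (Σ R : σ, {u : Fin (ar R) → A // u ∈ AA.rel R}))

noncomputable instance Cons.fintype {A : Type} [Fintype σ] [Fintype A] {AA : Struct σ ar A} :
    Fintype (Cons AA) := Fintype.ofFinite _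

/-- Labels `(S, R)` with `R ∈ σ` and `S ⊆ [arity R]`. -/
abbrev Label (σ : Type) (ar : σ → ℕ) : Type := Σ R : σ, Finset (Fin (ar R))

/-- The entry of the matrix representation `M_AA` of a structure at `(a, R(𝐚))`:
the label `(S, R)` with `S = {i : 𝐚[i] = a}`. -/
def lab {A : Type} (AA : Struct σ ar A) (a : A) (c : Cons AA) : Label σ ar :=
  ⟨c.1, Finset.univ.filter fun i => c.2.1 i = a⟩

/-- The 0/1 matrix `M_AA^ℓ`. -/
def labMat {A : Type} (AA : Struct σ ar A) (ℓ : Label σ ar) : Matrix A (Cons AA) ℝ :=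
  fun a c => if lab AA a c = ℓ then 1 else 0

/-- A doubly stochastic matrix: non-negative entries, all rows and all columns sum to 1. -/
def IsDoublyStochastic {α β : Type} [Fintype α] [Fintype β] (X : Matrix α β ℝ) : Prop :=
  (∀ i j, 0 ≤ X i j) ∧ (∀ i, ∑ j, X i j = 1) ∧ (∀ j, ∑ i, X i j = 1)

/-- A left stochastic matrix: non-negative entries, all columns sum to 1. -/
def IsLeftStochastic {α β : Type} [Fintype α] (X : Matrix α β ℝ) : Prop :=
  (∀ i j, 0 ≤ X i j) ∧ (∀ j, ∑ i, X i j = 1)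

/-- Fractional isomorphism: doubly stochastic `X`, `Y` with
`X M_AA^ℓ = M_BB^ℓ Y` and `M_AA^ℓ Yᵀ = Xᵀ M_BB^ℓ` for every label `ℓ`. -/
def FracIso {A B : Type} [Fintype σ] [Fintype A] [Fintype B]
    (AA : Struct σ ar A) (BB : Struct σ ar B) : Prop :=
  ∃ (X : Matrix B A ℝ) (Y : Matrix (Cons BB) (Cons AA) ℝ),
    IsDoublyStochastic X ∧ IsDoublyStochastic Y ∧
    ∀ ℓ : Label σ ar,
      X * labMat AA ℓ = labMat BB ℓ * Y ∧
      labMat AA ℓ * Y.transpose = X.transpose * labMat BB ℓ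

/-- The type of iterated degrees of depth `k`. -/
def DegT (L : Type) : ℕ → Type
  | 0 => Bool
  | k + 1 => Multiset (L × DegT L k)

/-- The iterated degree `δ_k` of an element or a constraint of a structure. -/
def iterDeg {A : Type} [Fintype σ] [Fintype A] (AA : Struct σ ar A) :
    (k : ℕ) → A ⊕ Cons AA → DegT (Label σ ar) k
  | 0, x => x.isLeft
  | k + 1, Sum.inl a =>
      (Finset.univ.val.map fun c : Cons AA => (lab AA a c, iterDeg AA k (Sum.inr c)) :
        Multiset (Label σ ar × DegT (Label σ ar) k))
  | k + 1, Sum.inr c =>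
      (Finset.univ.val.map fun a : A => (lab AA a c, iterDeg AA k (Sum.inl a)) :
        Multiset (Label σ ar × DegT (Label σ ar) k))

/-- Two structures have the same iterated degree sequence. -/
def SameIterDeg {A B : Type} [Fintype σ] [Fintype A] [Fintype B]
    (AA : Struct σ ar A) (BB : Struct σ ar B) : Prop :=
  ∀ k : ℕ,
    Multiset.map (iterDeg AA k) (Finset.univ.val : Multiset (A ⊕ Cons AA)) =
    Multiset.map (iterDeg BB k) (Finset.univ.val : Multiset (B ⊕ Cons BB))
/-- An equitable partition of a structure, given by index maps `p` (on the universe)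
and `q` (on the constraints) together with its parameters `cpar`, `dpar`. -/
def IsEquitable {A : Type} (AA : Struct σ ar A) {I : Type u} {J : Type v}
    (p : A → I) (q : Cons AA → J)
    (cpar : Label σ ar → I → J → ℕ) (dpar : Label σ ar → J → I → ℕ) : Prop :=
  (∀ (a : A) (ℓ : Label σ ar) (j : J),
      Nat.card {c : Cons AA // q c = j ∧ lab AA a c = ℓ} = cpar ℓ (p a) j) ∧
  (∀ (c : Cons AA) (ℓ : Label σ ar) (i : I),
      Nat.card {a : A // p a = i ∧ lab AA a c = ℓ} = dpar ℓ (q c) i)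

/-- Two structures have a common equitable partition: equitable partitions with the same
index sets, the same parameters, and corresponding classes of equal sizes. -/
def CommonEquitable {A B : Type} (AA : Struct σ ar A) (BB : Struct σ ar B) : Prop :=
  ∃ (I J : Type) (pA : A → I) (qA : Cons AA → J) (pB : B → I) (qB : Cons BB → J)
    (cpar : Label σ ar → I → J → ℕ) (dpar : Label σ ar → J → I → ℕ),
    IsEquitable AA pA qA cpar dpar ∧ IsEquitable BB pB qB cpar dpar ∧
    (∀ i : I, Nat.card {a : A // pA a = i} = Nat.card {b : B // pB b = i}) ∧
    (∀ j : J, Nat.card {c : Cons AA // qA c = j} = Nat.card {c : Cons BB // qB c = j})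

/-- `h` is a homomorphism from `AA` to `BB`. -/
def IsHom {A B : Type} (AA : Struct σ ar A) (BB : Struct σ ar B) (h : A → B) : Prop :=
  ∀ (R : σ) (u : Fin (ar R) → A), u ∈ AA.rel R → (fun i => h (u i)) ∈ BB.rel R

/-- The number of homomorphisms from `AA` to `BB`. -/
def homCount {A B : Type} (AA : Struct σ ar A) (BB : Struct σ ar B) : ℕ :=
  Nat.card {h : A → B // IsHom AA BB h}

/-- The number of homomorphisms from `(TT, t)` to `(DD, d)` (with a designated element). -/
def rhomCount {T D : Type} (TT : Struct σ ar T) (t : T) (DD : Struct σ ar D) (d : D) : ℕ :=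
  Nat.card {h : T → D // IsHom TT DD h ∧ h t = d}

/-- The factor graph of a structure: bipartite graph on elements and constraints. -/
def factorGraph {A : Type} (AA : Struct σ ar A) : SimpleGraph (A ⊕ Cons AA) :=
  SimpleGraph.fromRel fun x y =>
    ∃ (a : A) (c : Cons AA), x = Sum.inl a ∧ y = Sum.inr c ∧ ∃ i, c.2.1 i = a

/-- A structure is an ftree if its factor graph is a tree. -/
def IsFtree {A : Type} (AA : Struct σ ar A) : Prop := (factorGraph AA).IsTree
/-- The set `{𝐚}` of elements occurring in the tuple of a constraint, as a Finset. -/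
def tsupp {A : Type} {AA : Struct σ ar A} (c : Cons AA) : Finset A :=
  Finset.univ.image c.2.1

lemma mem_tsupp {A : Type} {AA : Struct σ ar A} (c : Cons AA) (i : Fin (ar c.1)) :
    c.2.1 i ∈ tsupp c :=
  Finset.mem_image_of_mem _ (Finset.mem_univ i)

/-- Feasibility of the system `SA^k(AA, BB)`. -/
def SAfeasible {A B : Type} [Fintype B] (k : ℕ)
    (AA : Struct σ ar A) (BB : Struct σ ar B) : Prop :=
  ∃ (pV : (V : Finset A) → ({x // x ∈ V} → B) → ℝ)
    (pC : (c : Cons AA) → ({x // x ∈ tsupp c} → B) → ℝ),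
    -- all variables take values in [0,1]
    (∀ (V : Finset A) (f : {x // x ∈ V} → B),
        V.Nonempty → V.card ≤ k → 0 ≤ pV V f ∧ pV V f ≤ 1) ∧
    (∀ (c : Cons AA) (f : {x // x ∈ tsupp c} → B), 0 ≤ pC c f ∧ pC c f ≤ 1) ∧
    -- (SA1)
    (∀ V : Finset A, V.Nonempty → V.card ≤ k →
        ∑ f : {x // x ∈ V} → B, pV V f = 1) ∧
    -- (SA2)
    (∀ (U V : Finset A) (hUV : U ⊆ V), U.Nonempty → V.card ≤ k →
        ∀ f : {x // x ∈ U} → B,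
          pV U f = ∑ g : {x // x ∈ V} → B,
            if ∀ u : {x // x ∈ U}, g ⟨u.1, hUV u.2⟩ = f u then pV V g else 0) ∧
    -- (SA3)
    (∀ (c : Cons AA) (U : Finset A) (hU : U ⊆ tsupp c), U.Nonempty → U.card ≤ k →
        ∀ f : {x // x ∈ U} → B,
          pV U f = ∑ g : {x // x ∈ tsupp c} → B,
            if ∀ u : {x // x ∈ U}, g ⟨u.1, hU u.2⟩ = f u then pC c g else 0) ∧
    -- (SA4)
    (∀ (c : Cons AA) (f : {x // x ∈ tsupp c} → B),
        (fun i => f ⟨c.2.1 i, mem_tsupp c i⟩) ∉ BB.rel c.1 → pC c f = 0)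

/-- The relation symbols of the signature `σ*_k`. -/
inductive StarSym (σ : Type) (ar : σ → ℕ) (k : ℕ) : Type
  | TS (j : Fin k) (S : Finset (Fin (j.1 + 1)))
  | TI (j j' : Fin k) (iv : Fin (j'.1 + 1) → Fin (j.1 + 1))
  | RS (R : σ) (S : Finset (Fin (ar R)))
  | RI (R : σ) (j : Fin k) (iv : Fin (j.1 + 1) → Fin (ar R))

/-- Arities for `σ*_k`. -/
def starAr {k : ℕ} : StarSym σ ar k → ℕ
  | .TS _ _ => 1
  | .TI _ _ _ => 2
  | .RS _ _ => 1
  | .RI _ _ _ => 2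

/-- The universe of `AA*_k`: all tuples of length `1 ≤ j ≤ k` together with the constraints. -/
def StarUniv {A : Type} (AA : Struct σ ar A) (k : ℕ) : Type :=
  ((j : Fin k) × (Fin (j.1 + 1) → A)) ⊕ Cons AA

instance StarUniv.finite {A : Type} [Finite σ] [Finite A] {AA : Struct σ ar A} {k : ℕ} :
    Finite (StarUniv AA k) :=
  inferInstanceAs (Finite (((j : Fin k) × (Fin (j.1 + 1) → A)) ⊕ Cons AA))

noncomputable instance StarUniv.fintype {A : Type} [Fintype σ] [Fintype A]
    {AA : Struct σ ar A} {k : ℕ} : Fintype (StarUniv AA k) := Fintype.ofFinite _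

/-- The structure `AA*_k`. -/
def starStruct {A : Type} (AA : Struct σ ar A) (k : ℕ) :
    Struct (StarSym σ ar k) starAr (StarUniv AA k) where
  rel
    | .TS j S => {u | ∃ v : Fin (j.1 + 1) → A,
        (∀ i ∈ S, ∀ i' ∈ S, v i = v i') ∧ u = fun _ => Sum.inl ⟨j, v⟩}
    | .TI j j' iv => {u | ∃ v : Fin (j.1 + 1) → A,
        u = ![Sum.inl ⟨j, v⟩, Sum.inl ⟨j', v ∘ iv⟩]}
    | .RS R S => {u | ∃ (v : Fin (ar R) → A) (hv : v ∈ AA.rel R),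
        (∀ i ∈ S, ∀ i' ∈ S, v i = v i') ∧ u = fun _ => Sum.inr ⟨R, ⟨v, hv⟩⟩}
    | .RI R j iv => {u | ∃ (v : Fin (ar R) → A) (hv : v ∈ AA.rel R),
        u = ![Sum.inr ⟨R, ⟨v, hv⟩⟩, Sum.inl ⟨j, v ∘ iv⟩]}

/-- `AA ≡_k BB` : the structures `AA*_k` and `BB*_k` have a common equitable partition. -/
def EquivK {A B : Type} (k : ℕ) (AA : Struct σ ar A) (BB : Struct σ ar B) : Prop :=
  CommonEquitable (starStruct AA k) (starStruct BB k)

/-- A bundled σ-structure with finite universe. -/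
structure FinStruct (σ : Type) (ar : σ → ℕ) : Type 1 where
  carrier : Type
  [fin : Fintype carrier]
  str : Struct σ ar carrier

/-- One step in a chain: either a homomorphism exists, or the structures are
`≡_1`-equivalent (i.e. have a common equitable partition). -/
def FStep (X Y : FinStruct σ ar) : Prop :=
  (∃ h : X.carrier → Y.carrier, IsHom X.str Y.str h) ∨ CommonEquitable X.str Y.str

/-- The structure `AA` has treewidth `< k`: there is a tree-decomposition all of whose
bags have at most `k` elements. -/
def HasTreewidthLT {A : Type} (AA : Struct σ ar A) (k : ℕ) : Prop :=
  ∃ (V : Type) (G : SimpleGraph V) (β : V → Finset A),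
    G.IsTree ∧
    (∀ c : Cons AA, ∃ v : V, ∀ i, c.2.1 i ∈ β v) ∧
    (∀ (a : A) (u v : V), a ∈ β u → a ∈ β v →
      ∀ p : G.Walk u v, p.IsPath → ∀ w ∈ p.support, a ∈ β w) ∧
    (∀ v : V, (β v).card ≤ k)
/-- The adjacency matrix of a graph (a structure with one binary relation). -/
def adjMat {A : Type} (AA : Struct Unit (fun _ => 2) A) : Matrix A A ℝ :=
  fun a a' => if ![a, a'] ∈ AA.rel () then 1 else 0

/-- A matrix is decomposable if, up to partitioning rows and columns into two
(nontrivial) blocks, it is a direct sum. -/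
def MDecomposable {V W : Type} (M : Matrix V W ℝ) : Prop :=
  ∃ (SV : Set V) (SW : Set W),
    (SV.Nonempty ∨ SW.Nonempty) ∧ (SVᶜ.Nonempty ∨ SWᶜ.Nonempty) ∧
    ∀ v w, (v ∈ SV ∧ w ∉ SW) ∨ (v ∉ SV ∧ w ∈ SW) → M v w = 0

/-- A bundled rooted ftree. -/
structure RootedFtree (σ : Type) (ar : σ → ℕ) : Type 1 where
  carrier : Type
  [fin : Fintype carrier]
  str : Struct σ ar carrier
  isFtree : IsFtree str
  root : carrier

/-- The profile of an element: the number of homomorphisms from each rooted ftree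
mapping the root to it. -/
def degProfile {D : Type} (DD : Struct σ ar D) (d : D) : RootedFtree σ ar → ℕ :=
  fun F => rhomCount F.str F.root DD d

/-- The class of a constraint: its relation symbol, its equality pattern, and the
`degProfile`-classes of its coordinates. -/
def qProfile {D : Type} (DD : Struct σ ar D) (c : Cons DD) :
    Σ R : σ, Set (Fin (ar R) × Fin (ar R)) × (Fin (ar R) → (RootedFtree σ ar → ℕ)) :=
  ⟨c.1, ({p | c.2.1 p.1 = c.2.1 p.2}, fun s => degProfile DD (c.2.1 s))⟩

/-- Number of homomorphisms with a designated element and a designated constraint. -/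
def rhomCount2 {T D : Type} (TT : Struct σ ar T) (t : T) (c : Cons TT)
    (DD : Struct σ ar D) (d : D) (c' : Cons DD) : ℕ :=
  Nat.card {h : T → D // IsHom TT DD h ∧ h t = d ∧
    (⟨c.1, fun i => h (c.2.1 i)⟩ : Σ R : σ, Fin (ar R) → D) = ⟨c'.1, c'.2.1⟩}

/-- `(t, R(𝐭))` can be mapped to `(d, R'(𝐝))`. -/
def CanMap {T D : Type} {TT : Struct σ ar T} {DD : Struct σ ar D}
    (t : T) (c : Cons TT) (d : D) (c' : Cons DD) : Prop :=
  ∃ hR : c.1 = c'.1,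
    (∀ s s' : Fin (ar c.1), c.2.1 s = c.2.1 s' →
        c'.2.1 (Fin.cast (congrArg ar hR) s) = c'.2.1 (Fin.cast (congrArg ar hR) s')) ∧
    (∀ s : Fin (ar c.1), c.2.1 s = t → c'.2.1 (Fin.cast (congrArg ar hR) s) = d)

/-- A substructure of a structure: a subset of the universe together with a subset of
the tuples of each relation, lying inside the subset. -/
structure Substr {A : Type} (AA : Struct σ ar A) : Type where
  carrier : Set A
  srel : ∀ R : σ, Set (Fin (ar R) → A)
  srel_sub : ∀ R : σ, srel R ⊆ AA.rel R
  srel_mem : ∀ R : σ, ∀ u ∈ srel R, ∀ i, u i ∈ carrier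

/-- The substructure as a structure in its own right. -/
def Substr.toStruct {A : Type} {AA : Struct σ ar A} (Q : Substr AA) :
    Struct σ ar {x // x ∈ Q.carrier} where
  rel R := {u | (fun i => (u i).1) ∈ Q.srel R}

/-- Containment of substructures. -/
def Substr.le {A : Type} {AA : Struct σ ar A} (Q Q' : Substr AA) : Prop :=
  Q.carrier ⊆ Q'.carrier ∧ ∀ R : σ, Q.srel R ⊆ Q'.srel R

/-- A subftree of `TT` avoiding the constraint `c`, containing a unique element of the
tuple of `c`, which moreover participates in exactly one constraint of the subftree. -/
def GoodPiece {T : Type} (TT : Struct σ ar T) (c : Cons TT) (Q : Substr TT) : Prop :=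
  IsFtree Q.toStruct ∧
  c.2.1 ∉ Q.srel c.1 ∧
  ∃ x ∈ Q.carrier, (∃ i, c.2.1 i = x) ∧
    (∀ y ∈ Q.carrier, (∃ i, c.2.1 i = y) → y = x) ∧
    (∃! e : Σ R : σ, {u // u ∈ Q.srel R}, ∃ i, e.2.1 i = x)

/-- The collection `TT \ c` of maximal subftrees as above. -/
def TreeMinus {T : Type} (TT : Struct σ ar T) (c : Cons TT) : Set (Substr TT) :=
  {Q | GoodPiece TT c Q ∧ ∀ Q' : Substr TT, GoodPiece TT c Q' → Q.le Q' → Q'.le Q}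

/-- The disjoint union of two structures. -/
def dUnion {A B : Type} (AA : Struct σ ar A) (BB : Struct σ ar B) :
    Struct σ ar (A ⊕ B) where
  rel R := {u | (∃ v ∈ AA.rel R, u = fun i => Sum.inl (v i)) ∨
                (∃ v ∈ BB.rel R, u = fun i => Sum.inr (v i))}

/-- Embedding of constraints of `AA` into constraints of the disjoint union. -/
def consInl {A B : Type} (AA : Struct σ ar A) (BB : Struct σ ar B) (c : Cons AA) :
    Cons (dUnion AA BB) :=
  ⟨c.1, ⟨fun i => Sum.inl (c.2.1 i), Or.inl ⟨c.2.1, c.2.2, rfl⟩⟩⟩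

/-- Embedding of constraints of `BB` into constraints of the disjoint union. -/
def consInr {A B : Type} (AA : Struct σ ar A) (BB : Struct σ ar B) (c : Cons BB) :
    Cons (dUnion AA BB) :=
  ⟨c.1, ⟨fun i => Sum.inr (c.2.1 i), Or.inr ⟨c.2.1, c.2.2, rfl⟩⟩⟩

/-- The stable-degree class of an element of the disjoint union: its full iterated
degree sequence. -/
def degPclass {A B : Type} [Fintype σ] [Fintype A] [Fintype B]
    (AA : Struct σ ar A) (BB : Struct σ ar B) (x : A ⊕ B) :
    (k : ℕ) → DegT (Label σ ar) k :=
  fun k => iterDeg (dUnion AA BB) k (Sum.inl x)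

/-- The stable-degree class of a constraint of the disjoint union. -/
def degQclass {A B : Type} [Fintype σ] [Fintype A] [Fintype B]
    (AA : Struct σ ar A) (BB : Struct σ ar B) (c : Cons (dUnion AA BB)) :
    (k : ℕ) → DegT (Label σ ar) k :=
  fun k => iterDeg (dUnion AA BB) k (Sum.inr c)
/-- The set `Y`: tuples in `(B × [m])^m` with no repeated entries, in which the copy
index of each entry is bounded by the number of occurrences of its `B`-component. -/
def Ytype (B : Type) (m : ℕ) : Type :=
  {y : Fin m → B × Fin m // Function.Injective y ∧
    ∀ i, ((y i).2 : ℕ) + 1 ≤ Nat.card {j : Fin m // (y j).1 = (y i).1}}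

/-- Permuting the coordinates of an element of `Y`. -/
def permY {B : Type} {m : ℕ} (τ : Equiv.Perm (Fin m)) (y : Ytype B m) : Ytype B m :=
  ⟨fun i => y.1 (τ i), y.2.1.comp τ.injective, fun i => by
    have h := y.2.2 (τ i)
    have hc : Nat.card {j : Fin m // (y.1 (τ j)).1 = (y.1 (τ i)).1}
        = Nat.card {j : Fin m // (y.1 j).1 = (y.1 (τ i)).1} :=
      Nat.card_congr (τ.subtypeEquiv fun j => Iff.rfl)
    exact le_trans h (le_of_eq hc.symm)⟩

/-- The structure `X₁` from the proof of Theorem `thm:SA1`, built from a choice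
function `choice` selecting a canonical element of `Y` for each multiset. -/
def X1struct {A B : Type} (AA : Struct σ ar A) (BB : Struct σ ar B) (m : ℕ)
    (choice : (Fin m → B) → Ytype B m) : Struct σ ar (A × Ytype B m) where
  rel R := {u | ∃ a : Fin (ar R) → A, a ∈ AA.rel R ∧
    ∃ tt : Fin m → Fin (ar R) → B,
      (∀ i, tt i ∈ BB.rel R) ∧
      (∀ i s s', a s = a s' → tt i s = tt i s') ∧
      ∃ τ : Equiv.Perm (Fin m),
        u = fun s => (a s, permY τ (choice fun i => tt i s))}


/-! ### Trees -/

section TreeLemmas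
open SimpleGraph

lemma acyclic_sum {V W : Type} {G : SimpleGraph V} {H : SimpleGraph W} (hG : G.IsAcyclic)
    (hH : H.IsAcyclic) : (G ⊕g H).IsAcyclic := by
  rw [isAcyclic_iff_forall_adj_isBridge] at *
  have key1 : ∀ (e : Sym2 V) (x y : V ⊕ W),
      ((G ⊕g H).deleteEdges {e.map Sum.inl}).Walk x y →
      ∀ a, x = Sum.inl a → ∃ b, y = Sum.inl b ∧ (G.deleteEdges {e}).Reachable a b := by
    intro e x y p
    induction p with
    | nil => intro a ha; exact ⟨a, ha, Reachable.refl _⟩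
    | @cons u v w h p ih =>
      intro a ha
      subst ha
      rcases v with v | v
      · obtain ⟨b, hb, hr⟩ := ih v rfl
        refine ⟨b, hb, Reachable.trans (Adj.reachable ?_) hr⟩
        rw [deleteEdges_adj] at h ⊢
        refine ⟨by simpa using h.1, fun hc => h.2 ?_⟩
        simp only [Set.mem_singleton_iff] at hc ⊢
        rw [← hc]; rfl
      · rw [deleteEdges_adj] at h
        simp at h
  have key2 : ∀ (e : Sym2 W) (x y : V ⊕ W),
      ((G ⊕g H).deleteEdges {e.map Sum.inr}).Walk x y →
      ∀ a, x = Sum.inr a → ∃ b, y = Sum.inr b ∧ (H.deleteEdges {e}).Reachable a b := by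
    intro e x y p
    induction p with
    | nil => intro a ha; exact ⟨a, ha, Reachable.refl _⟩
    | @cons u v w h p ih =>
      intro a ha
      subst ha
      rcases v with v | v
      · rw [deleteEdges_adj] at h
        simp at h
      · obtain ⟨b, hb, hr⟩ := ih v rfl
        refine ⟨b, hb, Reachable.trans (Adj.reachable ?_) hr⟩
        rw [deleteEdges_adj] at h ⊢
        refine ⟨by simpa using h.1, fun hc => h.2 ?_⟩
        simp only [Set.mem_singleton_iff] at hc ⊢
        rw [← hc]; rfl
  rintro (u | u) (v | v) h
  · have h1 := hG (by simpa using h : G.Adj u v)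
    rw [isBridge_iff] at h1 ⊢
    rintro ⟨p⟩
    obtain ⟨b, hb, hr⟩ := key1 s(u, v) _ _ p u rfl
    cases hb
    exact h1 hr
  · simp at h
  · simp at h
  · have h1 := hH (by simpa using h : H.Adj u v)
    rw [isBridge_iff] at h1 ⊢
    rintro ⟨p⟩
    obtain ⟨b, hb, hr⟩ := key2 s(u, v) _ _ p u rfl
    cases hb
    exact h1 hr

lemma tree_join {V W : Type} {G : SimpleGraph V} {H : SimpleGraph W} (hG : G.IsTree)
    (hH : H.IsTree) (r : V) (s : W) : ((G ⊕g H) ⊔ edge (Sum.inl r) (Sum.inr s)).IsTree := by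
  refine ⟨hG.1.sum_sup_edge hH.1, ?_⟩
  exact IsAcyclic.sup_edge_of_not_reachable (not_reachable_sum_inl_inr _ _) (acyclic_sum hG.2 hH.2)

/-- In a tree, paths are contained in walks. -/
lemma path_subset_walk {V : Type} {G : SimpleGraph V} (hG : G.IsTree) {u v : V}
    (p : G.Walk u v) (hp : p.IsPath) (q : G.Walk u v) : ∀ w ∈ p.support, w ∈ q.support := by
  intro w hw
  have : p = q.bypass := by
    have := (hG.2.subsingleton_path u v).elim ⟨p, hp⟩ ⟨q.bypass, q.bypass_isPath⟩
    simpa using congrArg Subtype.val this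
  rw [this] at hw
  exact q.support_bypass_subset_support hw

/-- A rooted tree decomposition of a set of constraints. -/
def RTD {Y : Type} (k : ℕ) (C : Set (Σ R : σ, Fin (ar R) → Y)) (X : Finset Y) (W : Set Y) : Prop :=
  ∃ (V : Type) (G : SimpleGraph V) (β : V → Finset Y) (r : V),
    G.IsTree ∧ β r = X ∧ (∀ v, ∀ a ∈ β v, a ∈ W) ∧
    (∀ c ∈ C, ∃ v : V, ∀ i, c.2 i ∈ β v) ∧
    (∀ (a : Y) (u v : V), a ∈ β u → a ∈ β v →
      ∃ p : G.Walk u v, ∀ w ∈ p.support, a ∈ β w) ∧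
    (∀ v : V, (β v).card ≤ k)

lemma RTD.single {Y : Type} {k : ℕ} (C : Set (Σ R : σ, Fin (ar R) → Y)) (X : Finset Y) (W : Set Y)
    (hXW : ∀ a ∈ X, a ∈ W) (hk : X.card ≤ k) (hC : ∀ c ∈ C, ∀ i, c.2 i ∈ X) : RTD k C X W := by
  refine ⟨Unit, ⊥, fun _ => X, (), IsTree.of_subsingleton, rfl, fun _ => hXW,
    fun c hc => ⟨(), hC c hc⟩, ?_, fun _ => hk⟩
  rintro a ⟨⟩ ⟨⟩ h _
  exact ⟨Walk.nil, by simpa using h⟩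

lemma RTD.join {Y : Type} {k : ℕ} {C₁ C₂ : Set (Σ R : σ, Fin (ar R) → Y)} {X₁ X₂ : Finset Y}
    {W₁ W₂ : Set Y} (h₁ : RTD k C₁ X₁ W₁) (h₂ : RTD k C₂ X₂ W₂)
    (hW : ∀ a ∈ W₁, a ∈ W₂ → a ∈ X₁ ∧ a ∈ X₂) : RTD k (C₁ ∪ C₂) X₁ (W₁ ∪ W₂) := by
  obtain ⟨V, G, β, r, hG, hr, hβW, hC, hcon, hcard⟩ := h₁
  obtain ⟨V', G', β', r', hG', hr', hβW', hC', hcon', hcard'⟩ := h₂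
  set K := (G ⊕g G') ⊔ edge (Sum.inl r) (Sum.inr r') with hK
  let f : G →g K := ⟨Sum.inl, fun {a b} h => Or.inl (by simpa using h)⟩
  let f' : G' →g K := ⟨Sum.inr, fun {a b} h => Or.inl (by simpa using h)⟩
  have hadj : K.Adj (Sum.inl r) (Sum.inr r') := Or.inr (by simp [edge_adj])
  refine ⟨V ⊕ V', K, Sum.elim β β', Sum.inl r, tree_join hG hG' r r', hr, ?_, ?_, ?_, ?_⟩
  · rintro (v | v) a ha
    · exact Or.inl (hβW v a ha)
    · exact Or.inr (hβW' v a ha)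
  · rintro c (hc | hc)
    · obtain ⟨v, hv⟩ := hC c hc
      exact ⟨Sum.inl v, hv⟩
    · obtain ⟨v, hv⟩ := hC' c hc
      exact ⟨Sum.inr v, hv⟩
  · have cross : ∀ (a : Y) (u : V) (v : V'), a ∈ β u → a ∈ β' v →
        ∃ p : K.Walk (Sum.inl u) (Sum.inr v), ∀ w ∈ p.support, a ∈ Sum.elim β β' w := by
      intro a u v hu hv
      obtain ⟨ha1, ha2⟩ := hW a (hβW u a hu) (hβW' v a hv)
      rw [← hr] at ha1
      rw [← hr'] at ha2
      obtain ⟨p, hp⟩ := hcon a u r hu ha1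
      obtain ⟨q, hq⟩ := hcon' a r' v ha2 hv
      refine ⟨(p.map f).append (Walk.cons hadj (q.map f')), ?_⟩
      intro w hw
      rw [Walk.mem_support_append_iff, Walk.support_cons, Walk.support_map, Walk.support_map] at hw
      rcases hw with hw | hw
      · obtain ⟨z, hz, rfl⟩ := List.mem_map.1 hw
        exact hp z hz
      · rcases List.mem_cons.1 hw with rfl | hw
        · exact ha1
        · obtain ⟨z, hz, rfl⟩ := List.mem_map.1 hw
          exact hq z hz
    rintro a (u | u) (v | v) hu hv
    · obtain ⟨p, hp⟩ := hcon a u v hu hv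
      refine ⟨p.map f, fun w hw => ?_⟩
      rw [Walk.support_map] at hw
      obtain ⟨z, hz, rfl⟩ := List.mem_map.1 hw
      exact hp z hz
    · exact cross a u v hu hv
    · obtain ⟨p, hp⟩ := cross a v u hv hu
      exact ⟨p.reverse, fun w hw => hp w (by simpa using hw)⟩
    · obtain ⟨p, hp⟩ := hcon' a u v hu hv
      refine ⟨p.map f', fun w hw => ?_⟩
      rw [Walk.support_map] at hw
      obtain ⟨z, hz, rfl⟩ := List.mem_map.1 hw
      exact hp z hz
  · rintro (v | v)
    · exact hcard v
    · exact hcard' v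

lemma RTD.mono {Y : Type} {k : ℕ} {C C' : Set (Σ R : σ, Fin (ar R) → Y)} {X : Finset Y}
    {W W' : Set Y} (h : RTD k C X W) (hC : C' ⊆ C) (hW : W ⊆ W') : RTD k C' X W' := by
  obtain ⟨V, G, β, r, hG, hr, hβW, hc, hcon, hcard⟩ := h
  exact ⟨V, G, β, r, hG, hr, fun v a ha => hW (hβW v a ha), fun c hcC => hc c (hC hcC), hcon, hcard⟩

lemma RTD.hasTreewidthLT {Y : Type} {k : ℕ} (QQ : Struct σ ar Y) {X : Finset Y} {W : Set Y}
    (h : RTD k {c | c.2 ∈ QQ.rel c.1} X W) : HasTreewidthLT QQ k := by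
  obtain ⟨V, G, β, r, hG, hr, hβW, hc, hcon, hcard⟩ := h
  refine ⟨V, G, β, hG, fun c => ?_, ?_, hcard⟩
  · exact hc ⟨c.1, c.2.1⟩ c.2.2
  · intro a u v hu hv p hp w hw
    obtain ⟨q, hq⟩ := hcon a u v hu hv
    exact hq w (path_subset_walk hG p hp q w hw)

end TreeLemmas

/-! ### Terms -/

/-- Terms with `k` variables describing (labelled) structures of treewidth `< k`. -/
inductive LTerm (σ : Type) (ar : σ → ℕ) (k : ℕ) : Type
  | one : LTerm σ ar k
  | atom (R : σ) (iv : Fin (ar R) → Fin k) : LTerm σ ar k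
  | mul (s t : LTerm σ ar k) : LTerm σ ar k
  | bind (i : Fin k) (t : LTerm σ ar k) : LTerm σ ar k

section Terms
variable {k : ℕ}

/-- Evaluation of a term at an environment. -/
def LTerm.eval {A : Type} [Fintype A] (AA : Struct σ ar A) : LTerm σ ar k → (Fin k → A) → ℕ
  | .one, _ => 1
  | .atom R iv, v => if (fun i => v (iv i)) ∈ AA.rel R then 1 else 0
  | .mul s t, v => s.eval AA v * t.eval AA v
  | .bind i t, v => ∑ x : A, t.eval AA (Function.update v i x)

lemma exists_subst (t : LTerm σ ar k) : ∀ f : Fin k → Fin k, ∃ t' : LTerm σ ar k,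
    ∀ (A : Type) (_ : Fintype A) (AA : Struct σ ar A) (v : Fin k → A),
      t'.eval AA v = t.eval AA (v ∘ f) := by
  induction t with
  | one => intro f; exact ⟨.one, fun _ _ _ _ => rfl⟩
  | atom R iv => intro f; exact ⟨.atom R (fun i => f (iv i)), fun _ _ _ _ => rfl⟩
  | mul s t ihs iht =>
    intro f
    obtain ⟨s', hs⟩ := ihs f
    obtain ⟨t', ht⟩ := iht f
    exact ⟨.mul s' t', fun A _ AA v => by simp only [LTerm.eval, hs, ht]⟩
  | bind i t ih =>
    intro f
    obtain ⟨m, hm⟩ : ∃ m : Fin k, ∀ j, j ≠ i → f j ≠ m := by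
      by_contra hcon
      push Not at hcon
      have hsub : (Finset.univ : Finset (Fin k)) ⊆ (Finset.univ.erase i).image f := by
        intro m _
        obtain ⟨j, hj, hjm⟩ := hcon m
        exact Finset.mem_image.2 ⟨j, Finset.mem_erase.2 ⟨hj, Finset.mem_univ _⟩, hjm⟩
      have h1 := Finset.card_le_card hsub
      have h2 : ((Finset.univ.erase i).image f).card ≤ (Finset.univ.erase i).card :=
        Finset.card_image_le
      have h3 := Finset.card_erase_lt_of_mem (Finset.mem_univ i)
      omega
    obtain ⟨t', ht⟩ := ih (Function.update f i m)
    refine ⟨.bind m t', fun A _ AA v => ?_⟩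
    simp only [LTerm.eval, ht]
    refine Finset.sum_congr rfl fun x _ => ?_
    congr 1
    funext j
    by_cases hj : j = i
    · subst hj; simp
    · simp [Function.update_of_ne hj, Function.update_of_ne (hm j hj)]

/-- The bound elements of a term. -/
def LTerm.Bd : LTerm σ ar k → Type
  | .one => Empty
  | .atom _ _ => Empty
  | .mul s t => s.Bd ⊕ t.Bd
  | .bind _ t => Option t.Bd

lemma LTerm.finite_Bd (t : LTerm σ ar k) : Finite t.Bd := by
  induction t with
  | one => exact inferInstanceAs (Finite Empty)
  | atom R iv => exact inferInstanceAs (Finite Empty)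
  | mul s t ihs iht => exact inferInstanceAs (Finite (s.Bd ⊕ t.Bd))
  | bind i t ih => exact inferInstanceAs (Finite (Option t.Bd))

/-- Satisfaction of the quantifier-free part of a term. -/
def LTerm.Sat {A : Type} (AA : Struct σ ar A) : (t : LTerm σ ar k) → (Fin k → A) → (t.Bd → A) → Prop
  | .one, _, _ => True
  | .atom R iv, v, _ => (fun i => v (iv i)) ∈ AA.rel R
  | .mul s t, v, g => s.Sat AA v (fun x => g (Sum.inl x)) ∧ t.Sat AA v (fun x => g (Sum.inr x))
  | .bind i t, v, g => t.Sat AA (Function.update v i (g none)) (fun x => g (some x))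

/-- The constraints of a term. -/
def LTerm.Cn {Y : Type} : (t : LTerm σ ar k) → (Fin k → Y) → (t.Bd → Y) →
    Set (Σ R : σ, Fin (ar R) → Y)
  | .one, _, _ => ∅
  | .atom R iv, v, _ => {⟨R, fun i => v (iv i)⟩}
  | .mul s t, v, g => s.Cn v (fun x => g (Sum.inl x)) ∪ t.Cn v (fun x => g (Sum.inr x))
  | .bind i t, v, g => t.Cn (Function.update v i (g none)) (fun x => g (some x))

lemma LTerm.eval_eq_card {A : Type} [Fintype A] (AA : Struct σ ar A) (t : LTerm σ ar k) :
    ∀ v : Fin k → A, t.eval AA v = Nat.card {g : t.Bd → A // t.Sat AA v g} := by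
  induction t with
  | one =>
    intro v
    have : Nat.card {g : Empty → A // True} = 1 := by simp
    exact this.symm
  | atom R iv =>
    intro v
    have : Nat.card {g : Empty → A // (fun i => v (iv i)) ∈ AA.rel R} =
      if (fun i => v (iv i)) ∈ AA.rel R then 1 else 0 := by
      split_ifs with h <;> simp [h]
    exact this.symm
  | mul s t ihs iht =>
    intro v
    simp only [LTerm.eval, ihs, iht]
    rw [← Nat.card_prod]
    symm
    refine Nat.card_congr
      { toFun := fun g => (⟨fun x => g.1 (Sum.inl x), g.2.1⟩, ⟨fun x => g.1 (Sum.inr x), g.2.2⟩)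
        invFun := fun g => ⟨Sum.elim g.1.1 g.2.1, g.1.2, g.2.2⟩
        left_inv := ?_
        right_inv := ?_ }
    · rintro ⟨g, hg⟩
      apply Subtype.ext
      funext x
      cases x <;> rfl
    · rintro ⟨⟨g, hg⟩, ⟨g', hg'⟩⟩
      rfl
  | bind i t ih =>
    intro v
    have := t.finite_Bd
    simp only [LTerm.eval, ih]
    rw [← Nat.card_sigma]
    symm
    refine Nat.card_congr
      { toFun := fun g => ⟨g.1 none, ⟨fun x => g.1 (some x), g.2⟩⟩
        invFun := fun g => ⟨fun x : Option t.Bd => Option.elim x g.1 g.2.1, g.2.2⟩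
        left_inv := ?_
        right_inv := ?_ }
    · rintro ⟨g, hg⟩
      apply Subtype.ext
      funext x
      cases x <;> rfl
    · rintro ⟨x, ⟨g, hg⟩⟩
      rfl

lemma LTerm.sat_iff {A Y : Type} (AA : Struct σ ar A) (t : LTerm σ ar k) (h : Y → A) :
    ∀ (ρ : Fin k → Y) (ι : t.Bd → Y),
      t.Sat AA (fun i => h (ρ i)) (fun x => h (ι x)) ↔
        ∀ c ∈ t.Cn ρ ι, (fun i => h (c.2 i)) ∈ AA.rel c.1 := by
  induction t with
  | one => intro ρ ι; simp [LTerm.Sat, LTerm.Cn]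
  | atom R iv => intro ρ ι; simp [LTerm.Sat, LTerm.Cn]
  | mul s t ihs iht =>
    intro ρ ι
    simp only [LTerm.Sat, LTerm.Cn]
    rw [ihs ρ (fun x => ι (Sum.inl x)), iht ρ (fun x => ι (Sum.inr x))]
    constructor
    · rintro ⟨h1, h2⟩ c (hc | hc)
      · exact h1 c hc
      · exact h2 c hc
    · exact fun h => ⟨fun c hc => h c (Or.inl hc), fun c hc => h c (Or.inr hc)⟩
  | bind i t ih =>
    intro ρ ι
    simp only [LTerm.Sat, LTerm.Cn]
    rw [← ih]
    have : Function.update (fun i => h (ρ i)) i (h (ι none)) =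
        fun j => h (Function.update ρ i (ι none) j) := by
      funext j
      by_cases hj : j = i
      · subst hj; simp
      · simp [Function.update_of_ne hj]
    rw [this]

lemma LTerm.rtd {Y : Type} (t : LTerm σ ar k) :
    ∀ (ρ : Fin k → Y) (ι : t.Bd → Y), Function.Injective ι → (∀ i x, ρ i ≠ ι x) →
      RTD k (t.Cn ρ ι) (Finset.univ.image ρ) (Set.range ρ ∪ Set.range ι) := by
  have hcard : ∀ ρ : Fin k → Y, (Finset.univ.image ρ).card ≤ k := fun ρ =>
    Finset.card_image_le.trans (by simp)
  induction t with
  | one =>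
    intro ρ ι _ _
    exact RTD.single _ _ _ (by simp) (hcard ρ) (by simp [LTerm.Cn])
  | atom R iv =>
    intro ρ ι _ _
    exact RTD.single _ _ _ (by simp) (hcard ρ) (by simp [LTerm.Cn])
  | mul s t ihs iht =>
    intro ρ ι hι hρ
    have h1 := ihs ρ (fun x => ι (Sum.inl x)) (fun x y h => Sum.inl_injective (hι h))
      (fun i x => hρ i _)
    have h2 := iht ρ (fun x => ι (Sum.inr x)) (fun x y h => Sum.inr_injective (hι h))
      (fun i x => hρ i _)
    refine (h1.join h2 ?_).mono (fun c hc => hc) ?_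
    · rintro a (⟨i, rfl⟩ | ⟨x, rfl⟩) h
      · simp
      · rcases h with ⟨i, hi⟩ | ⟨y, hy⟩
        · exact absurd hi (hρ _ _)
        · exact absurd (hι hy) (by simp)
    · rintro a ((⟨i, rfl⟩ | ⟨x, rfl⟩) | (⟨i, rfl⟩ | ⟨x, rfl⟩))
      · exact Or.inl ⟨i, rfl⟩
      · exact Or.inr ⟨_, rfl⟩
      · exact Or.inl ⟨i, rfl⟩
      · exact Or.inr ⟨_, rfl⟩
  | bind i t ih =>
    intro ρ ι hι hρ
    have h2 := ih (Function.update ρ i (ι none)) (fun x => ι (some x))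
      (fun x y h => Option.some_injective _ (hι h)) (by
        intro j x
        by_cases hj : j = i
        · subst hj
          simp only [Function.update_self]
          intro h
          exact absurd (hι h) (by simp)
        · rw [Function.update_of_ne hj]
          exact hρ _ _)
    have h1 : RTD (σ := σ) (ar := ar) k ∅ (Finset.univ.image ρ) (Set.range ρ) :=
      RTD.single _ _ _ (by simp) (hcard ρ) (by simp)
    refine (h1.join h2 ?_).mono (fun c hc => Or.inr hc) ?_
    · rintro a ⟨j, rfl⟩ h
      refine ⟨by simp, ?_⟩
      rcases h with ⟨j', hj'⟩ | ⟨x, hx⟩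
      · exact Finset.mem_image.2 ⟨j', Finset.mem_univ _, hj'⟩
      · exact absurd hx.symm (hρ _ _)
    · rintro a (⟨j, rfl⟩ | (⟨j, rfl⟩ | ⟨x, rfl⟩))
      · exact Or.inl ⟨j, rfl⟩
      · by_cases hj : j = i
        · subst hj
          simp only [Function.update_self]
          exact Or.inr ⟨_, rfl⟩
        · rw [Function.update_of_ne hj]
          exact Or.inl ⟨j, rfl⟩
      · exact Or.inr ⟨_, rfl⟩

/-- The structure described by a term with all free variables identified. -/
def LTerm.str (t : LTerm σ ar k) : Struct σ ar (Option t.Bd) where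
  rel R := {u | ⟨R, u⟩ ∈ t.Cn (fun _ => none) some}

lemma LTerm.str_tw (t : LTerm σ ar k) : HasTreewidthLT t.str k := by
  refine RTD.hasTreewidthLT t.str ((t.rtd (fun _ => none) some (Option.some_injective _) (by simp)).mono
    ?_ subset_rfl)
  rintro ⟨R, u⟩ hc
  exact hc

lemma LTerm.str_homCount {A : Type} [Fintype A] (AA : Struct σ ar A) (t : LTerm σ ar k) :
    homCount t.str AA = ∑ x : A, t.eval AA (fun _ => x) := by
  have := t.finite_Bd
  simp only [LTerm.eval_eq_card]
  rw [← Nat.card_sigma]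
  have key : ∀ h : Option t.Bd → A, IsHom t.str AA h ↔
      t.Sat AA (fun _ => h none) (fun x => h (some x)) := by
    intro h
    rw [LTerm.sat_iff AA t h (fun _ => none) some]
    constructor
    · rintro hh ⟨R, u⟩ hc
      exact hh R u hc
    · intro hh R u hu
      exact hh ⟨R, u⟩ hu
  refine Nat.card_congr
      { toFun := fun g => ⟨g.1 none, ⟨fun x => g.1 (some x), (key _).1 g.2⟩⟩
        invFun := fun g => ⟨fun x : Option t.Bd => Option.elim x g.1 g.2.1, (key _).2 g.2.2⟩
        left_inv := ?_
        right_inv := ?_ }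
  · rintro ⟨g, hg⟩
    apply Subtype.ext
    funext x
    cases x <;> rfl
  · rintro ⟨x, ⟨g, hg⟩⟩
    rfl

end Terms

/-! ### Bijections and separation -/

lemma exists_equiv_of_fibers {X Y I : Type*} [Finite X] [Finite Y] (p : X → I) (q : Y → I)
    (h : ∀ i, Nat.card {x // p x = i} = Nat.card {y // q y = i}) :
    ∃ e : X ≃ Y, ∀ x, q (e x) = p x :=
  ⟨Equiv.ofFiberEquiv (fun i => (Finite.card_eq.1 (h i)).some), fun x => Equiv.ofFiberEquiv_map _ x⟩

lemma card_fiber_eq_of_equiv {X Y I : Type*} (p : X → I) (q : Y → I) (e : X ≃ Y)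
    (he : ∀ x, q (e x) = p x) (i : I) : Nat.card {x // p x = i} = Nat.card {y // q y = i} :=
  Nat.card_congr (e.subtypeEquiv fun x => by rw [he])

lemma equiv_fix {X Y I S : Type*} (p : X → I) (q : Y → I) (e₀ : X ≃ Y)
    (he₀ : ∀ x, q (e₀ x) = p x) (v : S → X) (w : S → Y) (D : Finset S)
    (hp : ∀ s ∈ D, p (v s) = q (w s)) (heq : ∀ s ∈ D, ∀ s' ∈ D, v s = v s' ↔ w s = w s') :
    ∃ e : X ≃ Y, (∀ x, q (e x) = p x) ∧ ∀ s ∈ D, e (v s) = w s := by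
  induction D using Finset.induction_on with
  | empty => exact ⟨e₀, he₀, by simp⟩
  | insert s D hs ih =>
    obtain ⟨e, he, hD⟩ := ih (fun s hs => hp s (Finset.mem_insert_of_mem hs))
      (fun s hs s' hs' => heq s (Finset.mem_insert_of_mem hs) s' (Finset.mem_insert_of_mem hs'))
    by_cases hex : ∃ s' ∈ D, v s = v s'
    · obtain ⟨s', hs', hv⟩ := hex
      refine ⟨e, he, fun r hr => ?_⟩
      rcases Finset.mem_insert.1 hr with rfl | hr
      · rw [hv, hD s' hs']
        exact ((heq r (Finset.mem_insert_self _ _) s' (Finset.mem_insert_of_mem hs')).1 hv).symm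
      · exact hD r hr
    · push Not at hex
      refine ⟨e.trans (Equiv.swap (e (v s)) (w s)), fun x => ?_, fun r hr => ?_⟩
      · have hps : q (e (v s)) = q (w s) := by rw [he, hp s (Finset.mem_insert_self _ _)]
        rw [Equiv.trans_apply, ← he x]
        by_cases h1 : e x = e (v s)
        · rw [h1, Equiv.swap_apply_left, hps]
        · by_cases h2 : e x = w s
          · rw [h2, Equiv.swap_apply_right, hps]
          · rw [Equiv.swap_apply_of_ne_of_ne h1 h2]
      · rcases Finset.mem_insert.1 hr with rfl | hr
        · simp
        · rw [Equiv.trans_apply, hD r hr]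
          refine Equiv.swap_apply_of_ne_of_ne ?_ ?_
          · rw [← hD r hr]
            intro h
            exact hex r hr (e.injective h).symm
          · intro h
            exact hex r hr ((heq s (Finset.mem_insert_self _ _) r (Finset.mem_insert_of_mem hr)).2 h.symm)

lemma separation {X Y T : Type} [Fintype X] [Fintype Y] (F : T → X → ℕ) (G : T → Y → ℕ)
    (o : T) (hFo : ∀ x, F o x = 1) (hGo : ∀ y, G o y = 1) (m : T → T → T)
    (hFm : ∀ s t x, F (m s t) x = F s x * F t x) (hGm : ∀ s t y, G (m s t) y = G s y * G t y)
    (hsum : ∀ t, ∑ x, F t x = ∑ y, G t y) (τ : T → ℕ) :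
    Nat.card {x // (fun t => F t x) = τ} = Nat.card {y // (fun t => G t y) = τ} := by
  let H : T → X ⊕ Y → ℤ := fun t => Sum.elim (fun x => (F t x : ℤ)) (fun y => (G t y : ℤ))
  let L : (X ⊕ Y → ℤ) → ℤ := fun h => ∑ x, h (Sum.inl x) - ∑ y, h (Sum.inr y)
  have hLsub : ∀ (h g : X ⊕ Y → ℤ) (c : ℤ), L (fun z => h z - c * g z) = L h - c * L g := by
    intro h g c
    simp only [L, Finset.sum_sub_distrib, ← Finset.mul_sum]
    ring
  have hHm : ∀ s t z, H (m s t) z = H s z * H t z := by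
    rintro s t (x | y)
    · simp [H, hFm]
    · simp [H, hGm]
  have hHo : ∀ z, H o z = 1 := by
    rintro (x | y)
    · simp [H, hFo]
    · simp [H, hGo]
  have hL0 : ∀ t, L (H t) = 0 := by
    intro t
    have := congrArg (Nat.cast : ℕ → ℤ) (hsum t)
    push_cast at this
    simp [L, H, this]
  have hbad : ∀ z : X ⊕ Y, ∃ s : T, ((fun t => H t z) ≠ fun t => (τ t : ℤ)) → H s z ≠ τ s := by
    intro z
    by_cases h : (fun t => H t z) = fun t => (τ t : ℤ)
    · exact ⟨o, fun h' => absurd h h'⟩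
    · obtain ⟨s, hs⟩ := Function.ne_iff.1 h
      exact ⟨s, fun _ => hs⟩
  choose s hs using hbad
  have hP : ∀ Z : Finset (X ⊕ Y), ∀ t,
      L (fun z => (∏ b ∈ Z, (H (s b) z - H (s b) b)) * H t z) = 0 := by
    intro Z
    induction Z using Finset.induction_on with
    | empty => intro t; simpa using hL0 t
    | insert b Z hb ih =>
      intro t
      have : (fun z => (∏ b' ∈ insert b Z, (H (s b') z - H (s b') b')) * H t z) =
          fun z => (∏ b' ∈ Z, (H (s b') z - H (s b') b')) * H (m (s b) t) z -
            H (s b) b * ((∏ b' ∈ Z, (H (s b') z - H (s b') b')) * H t z) := by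
        funext z
        rw [Finset.prod_insert hb, hHm]
        ring
      rw [this]
      refine (hLsub (fun z => (∏ b' ∈ Z, (H (s b') z - H (s b') b')) * H (m (s b) t) z)
        (fun z => (∏ b' ∈ Z, (H (s b') z - H (s b') b')) * H t z) (H (s b) b)).trans ?_
      rw [ih, ih]
      ring
  let bad : Finset (X ⊕ Y) := Finset.univ.filter fun z => (fun t => H t z) ≠ fun t => (τ t : ℤ)
  let C : ℤ := ∏ b ∈ bad, ((τ (s b) : ℤ) - H (s b) b)
  have hC : C ≠ 0 := by
    refine Finset.prod_ne_zero_iff.2 fun b hb => ?_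
    have := hs b (Finset.mem_filter.1 hb).2
    exact sub_ne_zero.2 (Ne.symm this)
  have hval : ∀ z, (∏ b ∈ bad, (H (s b) z - H (s b) b)) * H o z =
      if (fun t => H t z) = (fun t => (τ t : ℤ)) then C else 0 := by
    intro z
    rw [hHo, mul_one]
    split_ifs with h
    · refine Finset.prod_congr rfl fun b _ => ?_
      rw [congrFun h (s b)]
    · exact Finset.prod_eq_zero (Finset.mem_filter.2 ⟨Finset.mem_univ z, h⟩) (sub_self _)
  have hfin := hP bad o
  simp only [hval, L] at hfin
  have hX : ∀ x, ((fun t => H t (Sum.inl x)) = fun t => (τ t : ℤ)) ↔ (fun t => F t x) = τ := by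
    intro x
    simp only [funext_iff, H, Sum.elim_inl, Nat.cast_inj]
  have hY : ∀ y, ((fun t => H t (Sum.inr y)) = fun t => (τ t : ℤ)) ↔ (fun t => G t y) = τ := by
    intro y
    simp only [funext_iff, H, Sum.elim_inr, Nat.cast_inj]
  simp only [hX, hY] at hfin
  rw [← Finset.sum_filter, ← Finset.sum_filter, Finset.sum_const, Finset.sum_const, nsmul_eq_mul,
    nsmul_eq_mul, ← sub_mul] at hfin
  have h0 := (mul_eq_zero.1 hfin).resolve_right hC
  rw [Nat.card_eq_fintype_card, Nat.card_eq_fintype_card, Fintype.card_subtype, Fintype.card_subtype]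
  have := sub_eq_zero.1 h0
  exact_mod_cast this

/-! ### The similarity relation -/

section Sim
variable {k : ℕ} {A B : Type} [Fintype A] [Fintype B]

/-- `v` and `w` restricted to `D` cannot be distinguished by equalities and terms. -/
def SimOn (k : ℕ) (AA : Struct σ ar A) (BB : Struct σ ar B) {N : Type} (D : Finset N)
    (v : N → A) (w : N → B) : Prop :=
  (∀ s ∈ D, ∀ s' ∈ D, v s = v s' ↔ w s = w s') ∧
  ∀ f : Fin k → N, (∀ i, f i ∈ D) → ∀ t : LTerm σ ar k,
    t.eval AA (fun i => v (f i)) = t.eval BB (fun i => w (f i))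

lemma sim_sum (AA : Struct σ ar A) (BB : Struct σ ar B) (hk : 1 ≤ k)
    (hce : ∀ t : LTerm σ ar k, ∑ x : A, t.eval AA (fun _ => x) = ∑ y : B, t.eval BB (fun _ => y))
    {N : Type} {D : Finset N} {v : N → A} {w : N → B} (h : SimOn k AA BB D v w) (a : N)
    (ha : a ∉ D) (hD : D.card < k) :
    ∃ e : Fin k → N, (∀ n ∈ insert a D, ∃ i, e i = n) ∧ ∀ t : LTerm σ ar k,
      ∑ x : A, t.eval AA (fun i => Function.update v a x (e i)) =
      ∑ y : B, t.eval BB (fun i => Function.update w a y (e i)) := by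
  rcases D.eq_empty_or_nonempty with rfl | ⟨d₀, hd₀⟩
  · refine ⟨fun _ => a, ?_, ?_⟩
    · intro n hn
      simp at hn
      exact ⟨⟨0, hk⟩, hn.symm⟩
    · intro t
      simpa using hce t
  · let i₀ : Fin k := ⟨D.card, hD⟩
    let e' : Fin k → N := fun i => if hi : i.1 < D.card then (D.equivFin.symm ⟨i.1, hi⟩).1 else d₀
    have he'D : ∀ i, e' i ∈ D := by
      intro i
      simp only [e']
      split_ifs
      · exact Subtype.prop _
      · exact hd₀
    have hcomp : ∀ {Z : Type} (v : N → Z) (x : Z),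
        (fun i => Function.update v a x (Function.update e' i₀ a i)) =
          Function.update (fun i => v (e' i)) i₀ x := by
      intro Z v x
      funext i
      by_cases hi : i = i₀
      · subst hi; simp
      · rw [Function.update_of_ne hi, Function.update_of_ne hi, Function.update_of_ne]
        intro h
        exact ha (h ▸ he'D i)
    refine ⟨Function.update e' i₀ a, ?_, ?_⟩
    · intro n hn
      rcases Finset.mem_insert.1 hn with rfl | hn
      · exact ⟨i₀, by simp⟩
      · let j := D.equivFin ⟨n, hn⟩
        refine ⟨⟨j.1, j.2.trans hD⟩, ?_⟩
        rw [Function.update_of_ne]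
        · have : j.1 < D.card := j.2
          simp only [e', this, dif_pos]
          simp [j]
        · intro h
          have := congrArg Fin.val h
          have h2 := j.2
          simp only [i₀] at this
          omega
    · intro t
      have := h.2 e' he'D (.bind i₀ t)
      simp only [LTerm.eval] at this
      simp only [hcomp]
      exact this

lemma sim_ext (AA : Struct σ ar A) (BB : Struct σ ar B) (hk : 1 ≤ k)
    (hce : ∀ t : LTerm σ ar k, ∑ x : A, t.eval AA (fun _ => x) = ∑ y : B, t.eval BB (fun _ => y))
    {N : Type} {D : Finset N} {v : N → A} {w : N → B} (h : SimOn k AA BB D v w) (a : N)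
    (ha : a ∉ D) (hD : D.card < k) :
    ∃ φ : A ≃ B, ∀ x, SimOn k AA BB (insert a D) (Function.update v a x)
      (Function.update w a (φ x)) := by
  obtain ⟨e, he, hsum⟩ := sim_sum AA BB hk hce h a ha hD
  obtain ⟨φ₀, hφ₀⟩ := exists_equiv_of_fibers
    (fun x : A => fun t : LTerm σ ar k => t.eval AA (fun i => Function.update v a x (e i)))
    (fun y : B => fun t : LTerm σ ar k => t.eval BB (fun i => Function.update w a y (e i)))
    (fun τ => separation
      (fun t x => t.eval AA (fun i => Function.update v a x (e i)))
      (fun t y => t.eval BB (fun i => Function.update w a y (e i)))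
      LTerm.one (fun _ => rfl) (fun _ => rfl) LTerm.mul (fun _ _ _ => rfl) (fun _ _ _ => rfl)
      hsum τ)
  let Tv : A → (Fin k → N) → LTerm σ ar k → ℕ := fun x f t =>
    if ∀ i, f i ∈ insert a D then t.eval AA (fun i => Function.update v a x (f i)) else 0
  let Tw : B → (Fin k → N) → LTerm σ ar k → ℕ := fun y f t =>
    if ∀ i, f i ∈ insert a D then t.eval BB (fun i => Function.update w a y (f i)) else 0
  have hT : ∀ x, Tw (φ₀ x) = Tv x := by
    intro x
    funext f t
    simp only [Tv, Tw]
    split_ifs with hf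
    · choose g hg using fun i => he (f i) (hf i)
      obtain ⟨t', ht'⟩ := exists_subst t g
      have h1 := congrFun (hφ₀ x) t'
      rw [ht', ht'] at h1
      simp only [Function.comp_def, hg] at h1
      exact h1
    · rfl
  obtain ⟨φ, hφ, hφD⟩ := equiv_fix Tv Tw φ₀ hT v w D (by
    intro s hs
    funext f t
    simp only [Tv, Tw]
    split_ifs with hf
    · have hupd : ∀ {Z : Type} (v : N → Z),
          (fun i => Function.update v a (v s) (f i)) = fun i => v (if f i = a then s else f i) := by
        intro Z v
        funext i
        split_ifs with hi
        · rw [hi]; simp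
        · rw [Function.update_of_ne hi]
      rw [hupd, hupd]
      refine h.2 (fun i => if f i = a then s else f i) (fun i => ?_) t
      split_ifs with hi
      · exact hs
      · exact (Finset.mem_insert.1 (hf i)).resolve_left hi
    · rfl) h.1
  have hne : ∀ s ∈ D, s ≠ a := fun s hs h => ha (h ▸ hs)
  refine ⟨φ, fun x => ⟨?_, ?_⟩⟩
  · intro s hs s' hs'
    rcases Finset.mem_insert.1 hs with h1 | hs <;> rcases Finset.mem_insert.1 hs' with h2 | hs'
    · rw [h1, h2]; simp
    · rw [h1, Function.update_self, Function.update_self, Function.update_of_ne (hne _ hs'),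
        Function.update_of_ne (hne _ hs'), ← hφD s' hs', φ.apply_eq_iff_eq]
    · rw [h2, Function.update_self, Function.update_self, Function.update_of_ne (hne _ hs),
        Function.update_of_ne (hne _ hs), ← hφD s hs, φ.apply_eq_iff_eq]
    · rw [Function.update_of_ne (hne _ hs), Function.update_of_ne (hne _ hs'),
        Function.update_of_ne (hne _ hs), Function.update_of_ne (hne _ hs')]
      exact h.1 s hs s' hs'
  · intro f hf t
    have := congrFun (congrFun (hφ x) f) t
    simp only [Tv, Tw, if_pos hf] at this
    exact this.symm

lemma sim_extend_all (AA : Struct σ ar A) (BB : Struct σ ar B) (hk : 1 ≤ k)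
    (hce : ∀ t : LTerm σ ar k, ∑ x : A, t.eval AA (fun _ => x) = ∑ y : B, t.eval BB (fun _ => y))
    {N : Type} [Fintype N] (hN : Fintype.card N ≤ k) (n : ℕ) :
    ∀ (D : Finset N), Dᶜ.card = n → ∀ (v : N → A) (w : N → B), SimOn k AA BB D v w →
    ∃ Φ : {u : N → A // ∀ i ∈ D, u i = v i} ≃ {u : N → B // ∀ i ∈ D, u i = w i},
      ∀ u, SimOn k AA BB Finset.univ u.1 (Φ u).1 := by
  induction n with
  | zero =>
    intro D hD v w h
    have hDu : D = Finset.univ := by simpa using hD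
    subst hDu
    refine ⟨⟨fun _ => ⟨w, fun _ _ => rfl⟩, fun _ => ⟨v, fun _ _ => rfl⟩, ?_, ?_⟩, ?_⟩
    · rintro ⟨u, hu⟩
      exact Subtype.ext (funext fun i => (hu i (Finset.mem_univ i)).symm)
    · rintro ⟨u, hu⟩
      exact Subtype.ext (funext fun i => (hu i (Finset.mem_univ i)).symm)
    · rintro ⟨u, hu⟩
      have : u = v := funext fun i => hu i (Finset.mem_univ i)
      subst this
      exact h
  | succ n ih =>
    intro D hD v w h
    obtain ⟨a, ha⟩ : Dᶜ.Nonempty := Finset.card_pos.1 (by omega)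
    have haD : a ∉ D := Finset.mem_compl.1 ha
    have hcard : D.card < k := by
      have := Finset.card_add_card_compl D
      omega
    obtain ⟨φ, hφ⟩ := sim_ext AA BB hk hce h a haD hcard
    have hins : (insert a D)ᶜ.card = n := by
      rw [Finset.compl_insert, Finset.card_erase_of_mem ha, hD]; rfl
    choose Φ hΦ using fun x => ih (insert a D) hins _ _ (hφ x)
    have η : ∀ {Z : Type} (v : N → Z), ∃ η : {u : N → Z // ∀ i ∈ D, u i = v i} ≃
        Σ x : Z, {u : N → Z // ∀ i ∈ insert a D, u i = Function.update v a x i},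
        (∀ u, (η u).2.1 = u.1) ∧ (∀ u, (η.symm u).1 = u.2.1) := by
      intro Z v
      refine ⟨⟨fun u => ⟨u.1 a, u.1, ?_⟩, fun u => ⟨u.2.1, ?_⟩, ?_, ?_⟩, ?_, ?_⟩
      · intro i hi
        rcases Finset.mem_insert.1 hi with rfl | hi
        · simp
        · rw [Function.update_of_ne (fun h : i = a => haD (h ▸ hi)), u.2 i hi]
      · intro i hi
        rw [u.2.2 i (Finset.mem_insert_of_mem hi), Function.update_of_ne (fun h : i = a => haD (h ▸ hi))]
      · intro u; rfl
      · rintro ⟨x, u, hu⟩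
        have hx : u a = x := by simpa using hu a (Finset.mem_insert_self _ _)
        subst hx
        rfl
      · intro u; rfl
      · intro u; rfl
    obtain ⟨ηA, hηA, -⟩ := η v
    obtain ⟨ηB, -, hηB⟩ := η w
    refine ⟨ηA.trans ((Equiv.sigmaCongr φ Φ).trans ηB.symm), fun u => ?_⟩
    rw [Equiv.trans_apply, Equiv.trans_apply, hηB, ← hηA u]
    exact hΦ _ _

end Sim

/-! ### From the bijective game to homomorphism counts -/

section GameToHom
variable {A B Q : Type}

/-- The properties of a winning strategy in the bijective pebble game. -/
structure IsGame (k : ℕ) (AA : Struct σ ar A) (BB : Struct σ ar B)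
    (rel : ∀ j : ℕ, (Fin j → A) → (Fin j → B) → Prop) : Prop where
  zero : ∀ u w, rel 0 u w
  proj : ∀ (j j' : ℕ) u w, j' ≤ k → rel j u w → ∀ f : Fin j' → Fin j,
    rel j' (fun i => u (f i)) (fun i => w (f i))
  ext : ∀ (j : ℕ) u w, j < k → rel j u w → ∃ φ : A ≃ B, ∀ x,
    rel (j + 1) (Fin.snoc (α := fun _ => A) u x) (Fin.snoc (α := fun _ => B) w (φ x))
  con : ∀ (R : σ) u w, rel (ar R) u w → (u ∈ AA.rel R ↔ w ∈ BB.rel R)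

/-- A bijection between partial assignments respecting the game relation on some bags. -/
def GoodState (k : ℕ) (rel : ∀ j : ℕ, (Fin j → A) → (Fin j → B) → Prop) (U : Finset Q)
    (𝓑 : Set (Finset Q)) : Prop :=
  ∃ Φ : ({x // x ∈ U} → A) ≃ ({x // x ∈ U} → B), ∀ X ∈ 𝓑, X ⊆ U ∧
    ∀ (h : {x // x ∈ U} → A) (j : ℕ) (_ : j ≤ k) (e : Fin j → {x // x ∈ U}),
      (∀ i, (e i).1 ∈ X) → rel j (fun i => h (e i)) (fun i => Φ h (e i))

lemma insert_fun_equiv (U : Finset Q) (a : Q) (ha : a ∉ U) (Z : Type) :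
    ∃ E : ({x // x ∈ insert a U} → Z) ≃ ({x // x ∈ U} → Z) × Z,
      ∀ g, (∀ (x : Q) (hx : x ∈ U), (E g).1 ⟨x, hx⟩ = g ⟨x, Finset.mem_insert_of_mem hx⟩) ∧
        (E g).2 = g ⟨a, Finset.mem_insert_self _ _⟩ := by
  refine ⟨⟨fun g => (fun x => g ⟨x.1, Finset.mem_insert_of_mem x.2⟩,
      g ⟨a, Finset.mem_insert_self _ _⟩),
    fun p x => if hx : x.1 ∈ U then p.1 ⟨x.1, hx⟩ else p.2, ?_, ?_⟩, ?_⟩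
  · intro g
    funext x
    by_cases hx : x.1 ∈ U
    · simp [hx]
    · have : x = ⟨a, Finset.mem_insert_self _ _⟩ :=
        Subtype.ext ((Finset.mem_insert.1 x.2).resolve_right hx)
      subst this
      simp [ha]
  · rintro ⟨h, x⟩
    refine Prod.ext ?_ ?_
    · funext y
      simp [y.2]
    · simp [ha]
  · intro g
    exact ⟨fun x hx => rfl, rfl⟩

variable {k : ℕ} {AA : Struct σ ar A} {BB : Struct σ ar B}
  {rel : ∀ j : ℕ, (Fin j → A) → (Fin j → B) → Prop}

lemma GoodState.add (hg : IsGame k AA BB rel) {U : Finset Q} {𝓑 : Set (Finset Q)}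
    (h : GoodState k rel U 𝓑) (a : Q) (ha : a ∉ U) (Y : Finset Q) (hY : Y ∈ 𝓑) (hYk : Y.card < k) :
    GoodState k rel (insert a U) (insert (insert a Y) 𝓑) := by
  obtain ⟨Φ, hΦ⟩ := h
  obtain ⟨EA, hEA⟩ := insert_fun_equiv U a ha A
  obtain ⟨EB, hEB⟩ := insert_fun_equiv U a ha B
  have hYU := (hΦ Y hY).1
  let e₀ : Fin Y.card → {x // x ∈ U} := fun i => ⟨(Y.equivFin.symm i).1, hYU (Y.equivFin.symm i).2⟩
  choose φ hφ using fun h => hg.ext _ _ _ hYk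
    ((hΦ Y hY).2 h Y.card hYk.le e₀ (fun i => (Y.equivFin.symm i).2))
  let Ψ := EA.trans ((Equiv.prodShear Φ φ).trans EB.symm)
  have hΨU : ∀ g (x : Q) (hx : x ∈ U),
      Ψ g ⟨x, Finset.mem_insert_of_mem hx⟩ = Φ (EA g).1 ⟨x, hx⟩ := by
    intro g x hx
    rw [← (hEB (Ψ g)).1 x hx]
    simp [Ψ, Equiv.prodShear]
  have hΨa : ∀ g, Ψ g ⟨a, Finset.mem_insert_self _ _⟩ = φ (EA g).1 (EA g).2 := by
    intro g
    rw [← (hEB (Ψ g)).2]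
    simp [Ψ, Equiv.prodShear]
  refine ⟨Ψ, fun X hX => ?_⟩
  rcases hX with rfl | hX
  · refine ⟨Finset.insert_subset_insert _ hYU, fun g j hj e he => ?_⟩
    let f : Fin j → Fin (Y.card + 1) := fun i =>
      if hi : (e i).1 ∈ Y then Fin.castSucc (Y.equivFin ⟨(e i).1, hi⟩) else Fin.last _
    have h1 := hg.proj _ j _ _ hj (hφ (EA g).1 (EA g).2) f
    have hA : (fun i => g (e i)) = fun i => Fin.snoc (α := fun _ => A) (fun i => (EA g).1 (e₀ i)) (EA g).2 (f i) := by
      funext i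
      by_cases hi : (e i).1 ∈ Y
      · simp only [f, dif_pos hi, Fin.snoc_castSucc, e₀]
        rw [(hEA g).1]
        simp
      · have : e i = ⟨a, Finset.mem_insert_self _ _⟩ :=
          Subtype.ext ((Finset.mem_insert.1 (he i)).resolve_right hi)
        simp only [f, dif_neg hi, Fin.snoc_last]
        rw [(hEA g).2, this]
    have hB : (fun i => Ψ g (e i)) =
        fun i => Fin.snoc (α := fun _ => B) (fun i => Φ (EA g).1 (e₀ i)) (φ (EA g).1 (EA g).2) (f i) := by
      funext i
      by_cases hi : (e i).1 ∈ Y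
      · simp only [f, dif_pos hi, Fin.snoc_castSucc, e₀]
        rw [← hΨU]
        simp
      · have : e i = ⟨a, Finset.mem_insert_self _ _⟩ :=
          Subtype.ext ((Finset.mem_insert.1 (he i)).resolve_right hi)
        simp only [f, dif_neg hi, Fin.snoc_last]
        rw [← hΨa, this]
    rw [hA, hB]
    exact h1
  · refine ⟨((hΦ X hX).1).trans (Finset.subset_insert _ _), fun g j hj e he => ?_⟩
    have h1 := (hΦ X hX).2 (EA g).1 j hj (fun i => ⟨(e i).1, (hΦ X hX).1 (he i)⟩) he
    have hA : (fun i => g (e i)) = fun i => (EA g).1 ⟨(e i).1, (hΦ X hX).1 (he i)⟩ := by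
      funext i
      rw [(hEA g).1]
    have hB : (fun i => Ψ g (e i)) = fun i => Φ (EA g).1 ⟨(e i).1, (hΦ X hX).1 (he i)⟩ := by
      funext i
      rw [← hΨU]
    rw [hA, hB]
    exact h1

lemma GoodState.sub {U : Finset Q} {𝓑 𝓑' : Set (Finset Q)}
    (h : GoodState k rel U 𝓑) (h' : ∀ X ∈ 𝓑', ∃ Y ∈ 𝓑, X ⊆ Y) : GoodState k rel U 𝓑' := by
  obtain ⟨Φ, hΦ⟩ := h
  refine ⟨Φ, fun X hX => ?_⟩
  obtain ⟨Y, hY, hXY⟩ := h' X hX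
  exact ⟨hXY.trans (hΦ Y hY).1, fun h j hj e he => (hΦ Y hY).2 h j hj e fun i => hXY (he i)⟩

lemma GoodState.addMany (hg : IsGame k AA BB rel) {U : Finset Q} {𝓑 : Set (Finset Q)}
    (h : GoodState k rel U 𝓑) (Y : Finset Q) (hY : Y ∈ 𝓑) (Z : Finset Q) (hZ : Disjoint Z U)
    (hk : (Z ∪ Y).card ≤ k) :
    GoodState k rel (Z ∪ U) (insert (Z ∪ Y) 𝓑) := by
  have hYU : Y ⊆ U := by
    obtain ⟨Φ, hΦ⟩ := h
    exact (hΦ Y hY).1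
  induction Z using Finset.induction_on with
  | empty =>
    rw [Finset.empty_union, Finset.empty_union]
    refine h.sub ?_
    rintro X (rfl | hX)
    · exact ⟨_, hY, subset_rfl⟩
    · exact ⟨X, hX, subset_rfl⟩
  | insert a Z haZ ih =>
    rw [Finset.disjoint_insert_left] at hZ
    rw [Finset.insert_union] at hk
    rw [Finset.insert_union, Finset.insert_union]
    have haY : a ∉ Z ∪ Y := by
      rw [Finset.mem_union]
      rintro (h | h)
      · exact haZ h
      · exact hZ.1 (hYU h)
    rw [Finset.card_insert_of_notMem haY] at hk
    have h1 := ih hZ.2 (by omega)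
    have h2 := h1.add hg a (by
      rw [Finset.mem_union]
      rintro (h | h)
      · exact haZ h
      · exact hZ.1 h) (Z ∪ Y) (Set.mem_insert _ _) (by omega)
    refine h2.sub ?_
    rintro X (rfl | hX)
    · exact ⟨_, Set.mem_insert _ _, subset_rfl⟩
    · exact ⟨X, Set.mem_insert_of_mem _ (Set.mem_insert_of_mem _ hX), subset_rfl⟩

lemma GoodState.start (hg : IsGame k AA BB rel) : GoodState k rel (∅ : Finset Q) {∅} := by
  refine ⟨⟨fun _ x => (Finset.notMem_empty _ x.2).elim, fun _ x => (Finset.notMem_empty _ x.2).elim, ?_, ?_⟩, ?_⟩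
  · intro g; funext x; exact (Finset.notMem_empty _ x.2).elim
  · intro g; funext x; exact (Finset.notMem_empty _ x.2).elim
  · rintro X rfl
    refine ⟨subset_rfl, fun h j hj e he => ?_⟩
    rcases j with _ | j
    · exact hg.zero _ _
    · exact (Finset.notMem_empty _ (he 0)).elim

open SimpleGraph in
lemma GoodState.tree (hg : IsGame k AA BB rel) {V : Type} {G : SimpleGraph V} (hG : G.IsTree)
    (β : V → Finset Q) (hcon : ∀ (a : Q) (u v : V), a ∈ β u → a ∈ β v →
      ∀ p : G.Walk u v, p.IsPath → ∀ w ∈ p.support, a ∈ β w)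
    (hk : ∀ v, (β v).card ≤ k) (r : V) (n : ℕ) :
    ∀ F : Finset V, F.card = n →
      (∀ v ∈ F, ∀ p : G.Walk r v, p.IsPath → ∀ w ∈ p.support, w ∈ F) →
      GoodState k rel (F.biUnion β) (insert ∅ {X | ∃ v ∈ F, X = β v}) := by
  induction n with
  | zero =>
    intro F hF _
    rw [Finset.card_eq_zero] at hF
    subst hF
    rw [Finset.biUnion_empty]
    refine (GoodState.start hg).sub ?_
    rintro X (rfl | ⟨v, hv, -⟩)
    · exact ⟨∅, rfl, subset_rfl⟩
    · simp at hv
  | succ n ih =>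
    intro F hF hcl
    have hFne : F.Nonempty := Finset.card_pos.1 (by omega)
    obtain ⟨w, hw, hmax⟩ := F.exists_max_image (fun v => G.dist r v) hFne
    -- in a tree, the length of a path is the distance
    have hlen : ∀ {x y : V} (p : G.Walk x y), p.IsPath → p.length = G.dist x y := by
      intro x y p hp
      obtain ⟨q, hq, hql⟩ := hG.1.exists_path_of_dist x y
      have := (hG.2.subsingleton_path x y).elim ⟨p, hp⟩ ⟨q, hq⟩
      have h2 : p = q := congrArg Subtype.val this
      rw [h2, hql]
    have hcl' : ∀ v ∈ F.erase w, ∀ p : G.Walk r v, p.IsPath → ∀ x ∈ p.support, x ∈ F.erase w := by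
      intro v hv p hp x hx
      refine Finset.mem_erase.2 ⟨?_, hcl v (Finset.mem_of_mem_erase hv) p hp x hx⟩
      rintro rfl
      have h1 := hlen _ (hp.takeUntil hx)
      have h2 := hlen p hp
      have h3 := hmax v (Finset.mem_of_mem_erase hv)
      have h4 := congrArg Walk.length (p.take_spec hx)
      rw [Walk.length_append] at h4
      have h5 : (p.dropUntil x hx).length = 0 := by omega
      exact (Finset.mem_erase.1 hv).1 (Walk.eq_of_length_eq_zero h5).symm
    have hS := ih (F.erase w) (by rw [Finset.card_erase_of_mem hw]; omega) hcl'
    -- the intersection of the new bag with the old ones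
    have hY : ∃ Y ∈ (insert ∅ {X | ∃ v ∈ F.erase w, X = β v} : Set (Finset Q)),
        β w ∩ (F.erase w).biUnion β ⊆ Y := by
      by_cases hwr : w = r
      · refine ⟨∅, Set.mem_insert _ _, ?_⟩
        have : F.erase w = ∅ := by
          rw [Finset.eq_empty_iff_forall_notMem]
          intro v hv
          obtain ⟨p, hp, -⟩ := hG.1.exists_path_of_dist r v
          exact (Finset.mem_erase.1 (hcl' v hv p hp r p.start_mem_support)).1 hwr.symm
        simp [this]
      · obtain ⟨p, hp, -⟩ := hG.1.exists_path_of_dist w r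
        cases p with
        | nil => exact absurd rfl hwr
        | @cons _ u _ hadj q =>
          rw [Walk.cons_isPath_iff] at hp
          have huF : u ∈ F := by
            refine hcl w hw (Walk.cons hadj q).reverse ?_ u (by simp)
            rw [Walk.isPath_reverse_iff, Walk.cons_isPath_iff]
            exact hp
          refine ⟨β u, Or.inr ⟨u, Finset.mem_erase.2 ⟨hadj.ne', huF⟩, rfl⟩, ?_⟩
          intro a ha
          rw [Finset.mem_inter, Finset.mem_biUnion] at ha
          obtain ⟨haw, x, hx, hax⟩ := ha
          obtain ⟨s, hs, -⟩ := hG.1.exists_path_of_dist r x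
          have hws : w ∉ s.support := fun h =>
            (Finset.mem_erase.1 (hcl' x hx s hs w h)).1 rfl
          have hwqs : w ∉ (q.append s).bypass.support := by
            intro h
            have h1 := (q.append s).support_bypass_subset_support h
            rw [Walk.mem_support_append_iff] at h1
            exact h1.elim hp.2 hws
          refine hcon a w x haw hax (Walk.cons hadj (q.append s).bypass) ?_ u (by simp)
          rw [Walk.cons_isPath_iff]
          exact ⟨Walk.bypass_isPath _, hwqs⟩
    obtain ⟨Y, hY1, hY2⟩ := hY
    set U := (F.erase w).biUnion β with hU
    have hS2 : GoodState k rel U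
        (insert (β w ∩ U) (insert ∅ {X | ∃ v ∈ F.erase w, X = β v})) := by
      refine hS.sub ?_
      rintro X (rfl | hX)
      · exact ⟨Y, hY1, hY2⟩
      · exact ⟨X, hX, subset_rfl⟩
    have hun : β w \ U ∪ β w ∩ U = β w := Finset.sdiff_union_inter _ _
    have hS3 := hS2.addMany hg (β w ∩ U) (Set.mem_insert _ _) (β w \ U) Finset.sdiff_disjoint
      (by rw [hun]; exact hk w)
    rw [hun, Finset.sdiff_union_self_eq_union] at hS3
    have hFU : F.biUnion β = β w ∪ U := by
      rw [hU, ← Finset.biUnion_insert, Finset.insert_erase hw]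
    rw [hFU]
    refine hS3.sub ?_
    rintro X (rfl | ⟨v, hv, rfl⟩)
    · exact ⟨∅, Or.inr (Or.inr (Or.inl rfl)), subset_rfl⟩
    · by_cases hvw : v = w
      · subst hvw
        exact ⟨_, Set.mem_insert _ _, subset_rfl⟩
      · exact ⟨β v, Or.inr (Or.inr (Or.inr ⟨v, Finset.mem_erase.2 ⟨hvw, hv⟩, rfl⟩)), subset_rfl⟩

lemma homCount_eq_of_game [Fintype σ] [Fintype Q] (hk : 1 ≤ k) (har : ∀ R : σ, ar R ≤ k)
    (hg : IsGame k AA BB rel) (QQ : Struct σ ar Q) (h : HasTreewidthLT QQ k) :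
    homCount QQ AA = homCount QQ BB := by
  obtain ⟨V, G, β, hG, hC, hcon, hcard⟩ := h
  choose vc hvc using hC
  obtain ⟨r⟩ := hG.1.nonempty
  choose P hP using fun v => hG.1.exists_path_of_dist r v
  let F : Finset V := Finset.univ.biUnion fun c : Cons QQ => (P (vc c)).support.toFinset
  have hF : ∀ v ∈ F, ∀ p : G.Walk r v, p.IsPath → ∀ w ∈ p.support, w ∈ F := by
    intro v hv p hp w hw
    obtain ⟨c, -, hc⟩ := Finset.mem_biUnion.1 hv
    refine Finset.mem_biUnion.2 ⟨c, Finset.mem_univ _, ?_⟩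
    rw [List.mem_toFinset] at hc ⊢
    have h1 : p = (P (vc c)).takeUntil v hc :=
      congrArg Subtype.val ((hG.2.subsingleton_path r v).elim ⟨p, hp⟩ ⟨_, (hP (vc c)).1.takeUntil hc⟩)
    rw [h1] at hw
    exact (P (vc c)).support_takeUntil_subset_support hc hw
  have hS := GoodState.tree hg hG β hcon hcard r _ F rfl hF
  -- add the isolated elements
  have hall : ∀ Z : Finset Q, Disjoint Z (F.biUnion β) →
      GoodState k rel (Z ∪ F.biUnion β) (insert ∅ {X | ∃ v ∈ F, X = β v}) := by
    intro Z
    induction Z using Finset.induction_on with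
    | empty => intro _; rw [Finset.empty_union]; exact hS
    | insert a Z haZ ih =>
      intro hd
      rw [Finset.disjoint_insert_left] at hd
      rw [Finset.insert_union]
      refine ((ih hd.2).add hg a ?_ ∅ (Set.mem_insert _ _) (by rw [Finset.card_empty]; omega)).sub ?_
      · rw [Finset.mem_union]
        rintro (h | h)
        · exact haZ h
        · exact hd.1 h
      · intro X hX
        exact ⟨X, Or.inr hX, subset_rfl⟩
  obtain ⟨Φ, hΦ⟩ := hall (F.biUnion β)ᶜ disjoint_compl_left
  have hmem : ∀ x : Q, x ∈ (F.biUnion β)ᶜ ∪ F.biUnion β := by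
    intro x
    rw [Finset.mem_union, Finset.mem_compl]
    exact (em _).symm
  let E : ∀ Z : Type, (Q → Z) ≃ ({x // x ∈ (F.biUnion β)ᶜ ∪ F.biUnion β} → Z) := fun Z =>
    ⟨fun h x => h x.1, fun h x => h ⟨x, hmem x⟩, fun h => rfl, fun h => rfl⟩
  refine Nat.card_congr (((E A).trans (Φ.trans (E B).symm)).subtypeEquiv ?_)
  intro h
  have key : ∀ (R : σ) (u : Fin (ar R) → Q), u ∈ QQ.rel R →
      ((fun i => h (u i)) ∈ AA.rel R ↔
        (fun i => ((E A).trans (Φ.trans (E B).symm)) h (u i)) ∈ BB.rel R) := by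
    intro R u hu
    have hv := hvc ⟨R, u, hu⟩
    have hvF : vc ⟨R, u, hu⟩ ∈ F :=
      Finset.mem_biUnion.2 ⟨⟨R, u, hu⟩, Finset.mem_univ _, by simp⟩
    exact hg.con R _ _ ((hΦ _ (Or.inr ⟨_, hvF, rfl⟩)).2 (E A h) (ar R) (har R)
      (fun i => ⟨u i, hmem _⟩) hv)
  exact forall_congr' fun R => forall_congr' fun u => forall_congr' fun hu => key R u hu

end GameToHom

/-! ### Common equitable partitions, relationally -/

section CE

lemma lab_eq_iff {τ : Type} {at' : τ → ℕ} {A B : Type} {AA : Struct τ at' A} {BB : Struct τ at' B}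
    (R : τ) (u : Fin (at' R) → A) (hu : u ∈ AA.rel R) (u' : Fin (at' R) → B) (hu' : u' ∈ BB.rel R)
    (a : A) (b : B) :
    lab AA a ⟨R, u, hu⟩ = lab BB b ⟨R, u', hu'⟩ ↔ ∀ s, u s = a ↔ u' s = b := by
  unfold lab
  simp only [Sigma.mk.injEq, heq_eq_eq, true_and]
  rw [Finset.ext_iff]
  simp

/-- A common equitable partition, without explicit parameters. -/
structure CE {τ : Type} {at' : τ → ℕ} {A B I J : Type} (AA : Struct τ at' A) (BB : Struct τ at' B)
    (pA : A → I) (qA : Cons AA → J) (pB : B → I) (qB : Cons BB → J) : Prop where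
  c : ∀ a b, pA a = pB b → ∀ ℓ j, Nat.card {c : Cons AA // qA c = j ∧ lab AA a c = ℓ} =
    Nat.card {c : Cons BB // qB c = j ∧ lab BB b c = ℓ}
  d : ∀ c c', qA c = qB c' → ∀ ℓ i, Nat.card {a : A // pA a = i ∧ lab AA a c = ℓ} =
    Nat.card {b : B // pB b = i ∧ lab BB b c' = ℓ}
  sp : ∀ i : I, Nat.card {a : A // pA a = i} = Nat.card {b : B // pB b = i}
  sq : ∀ j : J, Nat.card {c : Cons AA // qA c = j} = Nat.card {c : Cons BB // qB c = j}

variable {τ : Type} {at' : τ → ℕ} {A B I J : Type} {AA : Struct τ at' A} {BB : Struct τ at' B}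
    {pA : A → I} {qA : Cons AA → J} {pB : B → I} {qB : Cons BB → J}

lemma CE.symm (h : CE AA BB pA qA pB qB) : CE BB AA pB qB pA qA :=
  ⟨fun b a hab ℓ j => (h.c a b hab.symm ℓ j).symm, fun c c' hc ℓ j => (h.d c' c hc.symm ℓ j).symm,
    fun i => (h.sp i).symm, fun j => (h.sq j).symm⟩

lemma CE.of_commonEquitable (h : CommonEquitable AA BB) :
    ∃ (I J : Type) (pA : A → I) (qA : Cons AA → J) (pB : B → I) (qB : Cons BB → J),
      CE AA BB pA qA pB qB := by
  obtain ⟨I, J, pA, qA, pB, qB, cpar, dpar, hA, hB, hp, hq⟩ := h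
  refine ⟨I, J, pA, qA, pB, qB, ?_, ?_, hp, hq⟩
  · intro a b hab ℓ j
    rw [hA.1, hB.1, hab]
  · intro a b hab ℓ j
    rw [hA.2, hB.2, hab]

lemma exists_of_card_pos {X Y : Type} [Finite X] {P : X → Prop} {Q : Y → Prop}
    (h : Nat.card {x // P x} = Nat.card {y // Q y}) {x : X} (hx : P x) : ∃ y, Q y := by
  have : Nonempty {x // P x} := ⟨⟨x, hx⟩⟩
  have h1 : 0 < Nat.card {x // P x} := Nat.card_pos
  rw [h] at h1
  obtain ⟨⟨⟨y, hy⟩⟩, -⟩ := Nat.card_pos_iff.1 h1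
  exact ⟨y, hy⟩

lemma CE.commonEquitable [Finite A] [Finite B] [Finite (Cons AA)] [Finite (Cons BB)]
    (h : CE AA BB pA qA pB qB) : CommonEquitable AA BB := by
  have hpA : ∀ a, ∃ b, pB b = pA a := fun a => exists_of_card_pos (h.sp (pA a)) (x := a) rfl
  have hpB : ∀ b, ∃ a, pA a = pB b := fun b => exists_of_card_pos (h.sp (pB b)).symm (x := b) rfl
  have hqA : ∀ a, ∃ b, qB b = qA a := fun a => exists_of_card_pos (h.sq (qA a)) (x := a) rfl
  have hqB : ∀ b, ∃ a, qA a = qB b := fun b => exists_of_card_pos (h.sq (qB b)).symm (x := b) rfl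
  refine ⟨I, J, pA, qA, pB, qB,
    fun ℓ i j => if hi : ∃ a, pA a = i then
      Nat.card {c : Cons AA // qA c = j ∧ lab AA hi.choose c = ℓ} else 0,
    fun ℓ j i => if hj : ∃ c, qA c = j then
      Nat.card {a : A // pA a = i ∧ lab AA a hj.choose = ℓ} else 0, ⟨?_, ?_⟩, ⟨?_, ?_⟩, h.sp, h.sq⟩
  · intro a ℓ j
    have hi : ∃ a', pA a' = pA a := ⟨a, rfl⟩
    beta_reduce
    rw [dif_pos hi]
    obtain ⟨b, hb⟩ := hpA a
    rw [h.c a b hb.symm, h.c hi.choose b (hi.choose_spec.trans hb.symm)]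
  · intro a ℓ j
    have hi : ∃ a', qA a' = qA a := ⟨a, rfl⟩
    beta_reduce
    rw [dif_pos hi]
    obtain ⟨b, hb⟩ := hqA a
    rw [h.d a b hb.symm, h.d hi.choose b (hi.choose_spec.trans hb.symm)]
  · intro b ℓ j
    have hi := hpB b
    beta_reduce
    rw [dif_pos hi, h.c hi.choose b hi.choose_spec]
  · intro b ℓ j
    have hi := hqB b
    beta_reduce
    rw [dif_pos hi, h.d hi.choose b hi.choose_spec]

lemma CE.of_q [Finite A] (h : CE AA BB pA qA pB qB) {R : τ} {u : Fin (at' R) → A} {hu : u ∈ AA.rel R}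
    {u' : Fin (at' R) → B} {hu' : u' ∈ BB.rel R}
    (hq : qA ⟨R, u, hu⟩ = qB ⟨R, u', hu'⟩) (s : Fin (at' R)) : pA (u s) = pB (u' s) := by
  obtain ⟨y, hy, hl⟩ := exists_of_card_pos (h.d _ _ hq (lab AA (u s) ⟨R, u, hu⟩) (pA (u s)))
    (x := u s) ⟨rfl, rfl⟩
  rw [eq_comm, lab_eq_iff] at hl
  rw [← hy, (hl s).1 rfl]

lemma CE.move [Finite A] [Finite (Cons AA)] (h : CE AA BB pA qA pB qB) {R : τ}
    {u : Fin (at' R) → A} (hu : u ∈ AA.rel R) (s₀ : Fin (at' R)) {b : B} (hb : pA (u s₀) = pB b) :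
    ∃ u' ∈ BB.rel R, u' s₀ = b ∧ ∀ s, pA (u s) = pB (u' s) := by
  obtain ⟨⟨R', u', hu'⟩, hq, hl⟩ := exists_of_card_pos
    (h.c _ _ hb (lab AA (u s₀) ⟨R, u, hu⟩) (qA ⟨R, u, hu⟩)) (x := ⟨R, u, hu⟩) ⟨rfl, rfl⟩
  have hR : R' = R := congrArg Sigma.fst hl
  subst hR
  rw [eq_comm, lab_eq_iff] at hl
  exact ⟨u', hu', (hl s₀).1 rfl, fun s => h.of_q hq.symm s⟩

end CE

instance starSym_finite [Finite σ] (k : ℕ) : Finite (StarSym σ ar k) := by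
  let f : StarSym σ ar k →
      ((Σ j : Fin k, Finset (Fin (j.1 + 1))) ⊕
        (Σ j : Fin k, Σ j' : Fin k, Fin (j'.1 + 1) → Fin (j.1 + 1))) ⊕
      ((Σ R : σ, Finset (Fin (ar R))) ⊕ (Σ R : σ, Σ j : Fin k, Fin (j.1 + 1) → Fin (ar R))) := fun s =>
    match s with
    | .TS j S => .inl (.inl ⟨j, S⟩)
    | .TI j j' iv => .inl (.inr ⟨j, j', iv⟩)
    | .RS R S => .inr (.inl ⟨R, S⟩)
    | .RI R j iv => .inr (.inr ⟨R, j, iv⟩)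
  refine Finite.of_injective f ?_
  rintro (⟨⟩ | ⟨⟩ | ⟨⟩ | ⟨⟩) (⟨⟩ | ⟨⟩ | ⟨⟩ | ⟨⟩) h <;> simp only [f] at h <;> cases h <;> rfl

section EquivToGame
set_option linter.unusedSectionVars false
variable {k : ℕ} {A B I J : Type} [Fintype σ] [Fintype A] [Fintype B]
  {AA : Struct σ ar A} {BB : Struct σ ar B}
  {pA : StarUniv AA k → I} {qA : Cons (starStruct AA k) → J}
  {pB : StarUniv BB k → I} {qB : Cons (starStruct BB k) → J}

/-- The game relation coming from a common equitable partition of the star structures. -/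
def gameRel (pA : StarUniv AA k → I) (pB : StarUniv BB k → I) (m : ℕ) (u : Fin m → A)
    (w : Fin m → B) : Prop :=
  m = 0 ∨ ∃ (j : Fin k) (h : m = j.1 + 1),
    pA (Sum.inl ⟨j, u ∘ Fin.cast h.symm⟩) = pB (Sum.inl ⟨j, w ∘ Fin.cast h.symm⟩)

/-- The constraint of the star structure saying that `u` extends to `(u, x)`. -/
def snocCons (AA : Struct σ ar A) (j j' : Fin k) (h : j'.1 = j.1 + 1) (u : Fin (j.1 + 1) → A)
    (x : A) : Fin 2 → StarUniv AA k :=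
  ![Sum.inl ⟨j', (Fin.snoc (α := fun _ => A) u x : Fin (j.1 + 1 + 1) → A) ∘ Fin.cast (by omega)⟩, Sum.inl ⟨j, u⟩]

lemma snocCons_mem (AA : Struct σ ar A) (j j' : Fin k) (h : j'.1 = j.1 + 1) (u : Fin (j.1 + 1) → A)
    (x : A) : snocCons AA j j' h u x ∈
      (starStruct AA k).rel (.TI j' j (fun i => Fin.cast (by omega) (Fin.castSucc i))) := by
  refine ⟨(Fin.snoc (α := fun _ => A) u x : Fin (j.1 + 1 + 1) → A) ∘ Fin.cast (by omega), ?_⟩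
  have : u = ((Fin.snoc (α := fun _ => A) u x : Fin (j.1 + 1 + 1) → A) ∘ Fin.cast (by omega)) ∘
      (fun i => (Fin.cast (by omega) (Fin.castSucc i) : Fin (j'.1 + 1))) := by
    funext i
    simp
  unfold snocCons
  rw [← this]
  rfl

lemma snocCons_equiv (AA : Struct σ ar A) (j j' : Fin k) (h : j'.1 = j.1 + 1)
    (u : Fin (j.1 + 1) → A) :
    ∃ E : A ≃ {c : Cons (starStruct AA k) // lab (starStruct AA k) (Sum.inl ⟨j, u⟩) c =
        ⟨.TI j' j (fun i => Fin.cast (by omega) (Fin.castSucc i)), ({1} : Finset (Fin 2))⟩},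
      ∀ x, (E x).1 = ⟨_, _, snocCons_mem AA j j' h u x⟩ := by
  have hne : j' ≠ j := fun hh => by rw [hh] at h; omega
  have hl : ∀ x, lab (starStruct AA k) (Sum.inl ⟨j, u⟩) ⟨_, _, snocCons_mem AA j j' h u x⟩ =
        ⟨.TI j' j (fun i => Fin.cast (by omega) (Fin.castSucc i)), ({1} : Finset (Fin 2))⟩ := by
    intro x
    refine congrArg (Sigma.mk (β := fun R : StarSym σ ar k => Finset (Fin (starAr R)))
      (.TI j' j (fun i => Fin.cast (by omega) (Fin.castSucc i)))) ?_
    refine Finset.ext fun s => ?_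
    change Fin 2 at s
    refine Finset.mem_filter.trans (Iff.trans ?_ Finset.mem_singleton.symm)
    fin_cases s
    · refine iff_of_false ?_ (fun h => absurd h (by decide : (0 : Fin 2) ≠ 1))
      rintro ⟨-, hs⟩
      exact hne (congrArg Sigma.fst (Sum.inl_injective hs))
    · exact iff_of_true ⟨Finset.mem_univ _, rfl⟩ rfl
  refine ⟨Equiv.ofBijective (fun x => ⟨⟨_, _, snocCons_mem AA j j' h u x⟩, hl x⟩) ⟨?_, ?_⟩, fun x => rfl⟩
  · intro x y hxy
    have h1 := congrArg Subtype.val hxy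
    have h2 := congrFun (congrArg Subtype.val (eq_of_heq (Sigma.mk.inj h1).2)) (0 : Fin 2)
    have h3 := Sum.inl_injective h2
    simp only [Sigma.mk.injEq, heq_eq_eq, true_and] at h3
    have h4 := congrFun h3 (Fin.cast (by omega) (Fin.last (j.1 + 1)))
    simpa using h4
  · rintro ⟨⟨R, c, hc⟩, hcl⟩
    have hR : R = .TI j' j (fun i => Fin.cast (by omega) (Fin.castSucc i)) := congrArg Sigma.fst hcl
    subst hR
    replace hcl := eq_of_heq (Sigma.mk.inj hcl).2
    obtain ⟨v, rfl⟩ := hc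
    have h1 := (Finset.ext_iff.1 hcl (1 : Fin 2)).2 (Finset.mem_singleton_self _)
    have h2 := Sum.inl_injective (Finset.mem_filter.1 h1).2
    simp only [Sigma.mk.injEq, heq_eq_eq, true_and] at h2
    subst h2
    refine ⟨v (Fin.cast (by omega) (Fin.last (j.1 + 1))), ?_⟩
    refine Subtype.ext ?_
    have : ∀ i' : Fin (j.1 + 1 + 1), (Fin.snoc (α := fun _ => A)
      (v ∘ (fun i => (Fin.cast (by omega) (Fin.castSucc i) : Fin (j'.1 + 1))))
      (v (Fin.cast (by omega) (Fin.last (j.1 + 1)))) : Fin (j.1 + 1 + 1) → A) i' =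
        v (Fin.cast (by omega) i') := by
      intro i'
      refine Fin.lastCases ?_ (fun i => ?_) i'
      · simp
      · simp
    have h5 : (Fin.snoc (α := fun _ => A)
      (v ∘ (fun i => (Fin.cast (by omega) (Fin.castSucc i) : Fin (j'.1 + 1))))
      (v (Fin.cast (by omega) (Fin.last (j.1 + 1)))) : Fin (j.1 + 1 + 1) → A) ∘
        Fin.cast (by omega) = v := funext fun i => this _
    refine congrArg (Sigma.mk (β := fun R : StarSym σ ar k => {u // u ∈ (starStruct AA k).rel R})
      (.TI j' j (fun i => Fin.cast (by omega) (Fin.castSucc i)))) (Subtype.ext ?_)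
    simp only [snocCons]
    rw [h5]
    rfl

lemma zero_equiv (AA : Struct σ ar A) (hk : 0 < k) :
    ∃ E : A ≃ {x : StarUniv AA k // ∃ v, x = Sum.inl ⟨⟨0, hk⟩, v⟩},
      ∀ x, (E x).1 = Sum.inl ⟨⟨0, hk⟩, fun _ => x⟩ := by
  refine ⟨Equiv.ofBijective (fun x => ⟨Sum.inl ⟨⟨0, hk⟩, fun _ => x⟩, _, rfl⟩) ⟨?_, ?_⟩, fun x => rfl⟩
  · intro x y hxy
    have h3 := Sum.inl_injective (congrArg Subtype.val hxy)
    simp only [Sigma.mk.injEq, heq_eq_eq, true_and] at h3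
    exact congrFun h3 0
  · rintro ⟨_, v, rfl⟩
    refine ⟨v 0, Subtype.ext ?_⟩
    have : (fun _ => v 0) = v := by
      funext i
      congr 1
      exact Subsingleton.elim (α := Fin 1) _ _
    simp only [this]
    rfl

lemma CE.con_aux (h : CE (starStruct AA k) (starStruct BB k) pA qA pB qB) (R : σ)
    (u : Fin (ar R) → A) (w : Fin (ar R) → B) (hr : gameRel pA pB (ar R) u w) (hu : u ∈ AA.rel R) :
    w ∈ BB.rel R := by
  rcases hr with h0 | ⟨j, hj, hp⟩
  · have : IsEmpty (Fin (ar R)) := by rw [h0]; infer_instance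
    obtain ⟨y, hy⟩ := exists_of_card_pos (h.sp (pA (Sum.inr ⟨R, u, hu⟩)))
      (x := Sum.inr ⟨R, u, hu⟩) rfl
    have hm : (fun _ => Sum.inr ⟨R, u, hu⟩) ∈ (starStruct AA k).rel (.RS R ∅) :=
      ⟨u, hu, by simp, rfl⟩
    obtain ⟨u', ⟨v, hv, -, -⟩, -⟩ := h.move hm (0 : Fin 1) hy.symm
    have : w = v := Subsingleton.elim _ _
    rwa [this]
  · have hm : ![Sum.inr ⟨R, u, hu⟩, Sum.inl ⟨j, u ∘ Fin.cast hj.symm⟩] ∈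
      (starStruct AA k).rel (.RI R j (Fin.cast hj.symm)) := ⟨u, hu, rfl⟩
    obtain ⟨u', ⟨v, hv, rfl⟩, h1, -⟩ := h.move hm (1 : Fin 2) hp
    have h2 := Sum.inl_injective h1
    simp only [Sigma.mk.injEq, heq_eq_eq, true_and] at h2
    have : v = w := by
      funext i
      have := congrFun h2 (Fin.cast hj i)
      simpa using this
    rwa [← this]

lemma gameRel_symm {m : ℕ} {u : Fin m → A} {w : Fin m → B} (h : gameRel pA pB m u w) :
    gameRel pB pA m w u := by
  rcases h with h | ⟨j, hj, h⟩
  · exact Or.inl h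
  · exact Or.inr ⟨j, hj, h.symm⟩

lemma CE.zero_aux (h : CE (starStruct AA k) (starStruct BB k) pA qA pB qB) (j : Fin k)
    (v : Fin (j.1 + 1) → A) (y : StarUniv BB k) (hy : pA (Sum.inl ⟨j, v⟩) = pB y) :
    ∃ w, y = Sum.inl ⟨j, w⟩ := by
  have hm : (fun _ => Sum.inl ⟨j, v⟩) ∈ (starStruct AA k).rel (.TS j ∅) := ⟨v, by simp, rfl⟩
  obtain ⟨u', ⟨w, -, rfl⟩, h1, -⟩ := h.move hm (0 : Fin 1) hy
  exact ⟨w, h1.symm⟩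

lemma CE.isGame (h : CE (starStruct AA k) (starStruct BB k) pA qA pB qB) :
    IsGame k AA BB (gameRel pA pB) where
  zero u w := Or.inl rfl
  proj j j' u w hj' hr f := by
    rcases j' with _ | j'
    · exact Or.inl rfl
    · rcases hr with rfl | ⟨jj, rfl, hr⟩
      · exact (f 0).elim0
      · refine Or.inr ⟨⟨j', by omega⟩, rfl, ?_⟩
        have hm : ![Sum.inl ⟨jj, u⟩, Sum.inl ⟨⟨j', by omega⟩, u ∘ f⟩] ∈
          (starStruct AA k).rel (.TI jj ⟨j', by omega⟩ f) := ⟨u, rfl⟩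
        obtain ⟨u', ⟨v, rfl⟩, h1, h2⟩ := h.move hm (0 : Fin 2) hr
        have h3 := Sum.inl_injective h1
        simp only [Sigma.mk.injEq, heq_eq_eq, true_and] at h3
        subst h3
        exact h2 (1 : Fin 2)
  ext j u w hj hr := by
    rcases hr with rfl | ⟨jj, rfl, hr⟩
    · obtain ⟨e, he⟩ := exists_equiv_of_fibers pA pB h.sp
      obtain ⟨EA, hEA⟩ := zero_equiv AA hj
      obtain ⟨EB, hEB⟩ := zero_equiv BB hj
      let e' : {x : StarUniv AA k // ∃ v, x = Sum.inl ⟨⟨0, hj⟩, v⟩} ≃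
          {x : StarUniv BB k // ∃ v, x = Sum.inl ⟨⟨0, hj⟩, v⟩} := e.subtypeEquiv (by
        intro x
        constructor
        · rintro ⟨v, rfl⟩
          exact h.zero_aux _ v _ (he _).symm
        · rintro ⟨v, hv⟩
          refine h.symm.zero_aux _ v _ ?_
          rw [← hv, he])
      refine ⟨EA.trans (e'.trans EB.symm), fun x => Or.inr ⟨⟨0, hj⟩, rfl, ?_⟩⟩
      have h1 : (e' (EA x)).1 = (EB ((EA.trans (e'.trans EB.symm)) x)).1 := by simp
      rw [hEB] at h1
      have h2 : pB (e' (EA x)).1 = pA (EA x).1 := he _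
      rw [h1, hEA] at h2
      have hs : ∀ (Z : Type) (u : Fin 0 → Z) (x : Z),
          ((Fin.snoc (α := fun _ => Z) u x : Fin 1 → Z) ∘ Fin.cast rfl) = fun _ => x := by
        intro Z u x
        funext i
        have : i = Fin.last 0 := Subsingleton.elim (α := Fin 1) _ _
        subst this
        exact Fin.snoc_last (α := fun _ => Z) x u
      have h3 := h2.symm
      rw [← hs A u x, ← hs B w] at h3
      exact h3
    · let j' : Fin k := ⟨jj.1 + 1, hj⟩
      obtain ⟨EA, hEA⟩ := snocCons_equiv AA jj j' rfl u
      obtain ⟨EB, hEB⟩ := snocCons_equiv BB jj j' rfl w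
      obtain ⟨e, he⟩ := exists_equiv_of_fibers (fun x => qA (EA x).1) (fun y => qB (EB y).1) (by
        intro i
        have h1 := h.c _ _ hr ⟨.TI j' jj (fun i => Fin.cast (by rfl) (Fin.castSucc i)),
          ({1} : Finset (Fin 2))⟩ i
        have hA : Nat.card {x // qA (EA x).1 = i} = _ :=
          Nat.card_congr ((EA.subtypeEquiv (q := fun c => qA c.1 = i) (fun x => Iff.rfl)).trans
            ((Equiv.subtypeSubtypeEquivSubtypeInter _ (fun c => qA c = i)).trans
              (Equiv.subtypeEquivRight fun c => and_comm)))
        have hB : Nat.card {x // qB (EB x).1 = i} = _ :=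
          Nat.card_congr ((EB.subtypeEquiv (q := fun c => qB c.1 = i) (fun x => Iff.rfl)).trans
            ((Equiv.subtypeSubtypeEquivSubtypeInter _ (fun c => qB c = i)).trans
              (Equiv.subtypeEquivRight fun c => and_comm)))
        exact hA.trans (h1.trans hB.symm))
      refine ⟨e, fun x => Or.inr ⟨j', rfl, ?_⟩⟩
      have h1 := he x
      rw [hEA, hEB] at h1
      exact h.of_q h1.symm (0 : Fin 2)
  con R u w hr := ⟨h.con_aux R u w hr, h.symm.con_aux R w u (gameRel_symm hr)⟩

end EquivToGame

/-! ### From homomorphism counts to common equitable partitions -/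

section HomToEquiv
set_option linter.unusedSectionVars false
variable {k : ℕ} {A B : Type} [Fintype σ] [Fintype A] [Fintype B]

/-- What is extracted from the equality of homomorphism counts. -/
structure Hyp (k : ℕ) (AA : Struct σ ar A) (BB : Struct σ ar B) : Prop where
  hk : 1 ≤ k
  har : ∀ R : σ, ar R ≤ k
  hce : ∀ t : LTerm σ ar k, ∑ x : A, t.eval AA (fun _ => x) = ∑ y : B, t.eval BB (fun _ => y)
  hnull : ∀ R : σ, ar R = 0 → ∀ (u : Fin (ar R) → A) (w : Fin (ar R) → B),
    u ∈ AA.rel R ↔ w ∈ BB.rel R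

variable {AA : Struct σ ar A} {BB : Struct σ ar B}

lemma Hyp.symm (H : Hyp k AA BB) : Hyp k BB AA :=
  ⟨H.hk, H.har, fun t => (H.hce t).symm, fun R hR u w => (H.hnull R hR w u).symm⟩

lemma SimOn.symm {N : Type} {D : Finset N} {v : N → A} {w : N → B} (h : SimOn k AA BB D v w) :
    SimOn k BB AA D w v :=
  ⟨fun s hs s' hs' => (h.1 s hs s' hs').symm, fun f hf t => (h.2 f hf t).symm⟩

lemma null_aux (AA : Struct σ ar A) (BB : Struct σ ar B)
    (h : ∀ (Q : Type) (_ : Fintype Q) (QQ : Struct σ ar Q),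
        HasTreewidthLT QQ k → homCount QQ AA = homCount QQ BB)
    (R : σ) (hR : ar R = 0) (u : Fin (ar R) → A) (w : Fin (ar R) → B) (hu : u ∈ AA.rel R) :
    w ∈ BB.rel R := by
  have hE : IsEmpty (Fin (ar R)) := by rw [hR]; infer_instance
  have key : ∀ R' (v : Fin (ar R') → Empty), R' = R → (fun i => Empty.elim (v i)) ∈ AA.rel R' := by
    intro R' v h
    subst h
    have : u = fun i => Empty.elim (v i) := Subsingleton.elim _ _
    rw [← this]
    exact hu
  let QQ : Struct σ ar Empty := ⟨fun R' => {_u | R' = R}⟩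
  have htw : HasTreewidthLT QQ k := by
    refine RTD.hasTreewidthLT QQ (X := ∅) (W := ∅) (RTD.single _ _ _ (by simp) (by simp) ?_)
    intro c _ i
    exact (c.2 i).elim
  have hcard := h Empty inferInstance QQ htw
  have hA : IsHom QQ AA (Empty.elim) := by
    intro R' v hv
    exact key R' v hv
  obtain ⟨g, hg⟩ := exists_of_card_pos hcard hA
  have h1 := hg R (fun i => (hE.false i).elim) rfl
  have : w = fun i => g ((hE.false i).elim) := Subsingleton.elim _ _
  rw [this]
  exact h1

lemma Hyp.of_homCount (hk : 1 ≤ k) (har : ∀ R : σ, ar R ≤ k)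
    (AA : Struct σ ar A) (BB : Struct σ ar B)
    (h : ∀ (Q : Type) (_ : Fintype Q) (QQ : Struct σ ar Q),
        HasTreewidthLT QQ k → homCount QQ AA = homCount QQ BB) : Hyp k AA BB := by
  refine ⟨hk, har, fun t => ?_, fun R hR u w => ⟨null_aux AA BB h R hR u w,
    null_aux BB AA (fun Q i QQ hQ => (h Q i QQ hQ).symm) R hR w u⟩⟩
  have := t.finite_Bd
  have h1 := h (Option t.Bd) (Fintype.ofFinite _) t.str t.str_tw
  rwa [t.str_homCount, t.str_homCount] at h1

lemma Hyp.rel_iff (H : Hyp k AA BB) (R : σ) {u : Fin (ar R) → A} {w : Fin (ar R) → B}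
    (h : SimOn k AA BB Finset.univ u w) : u ∈ AA.rel R ↔ w ∈ BB.rel R := by
  by_cases hR : ar R = 0
  · exact H.hnull R hR u w
  · let f : Fin k → Fin (ar R) := fun m => if hm : m.1 < ar R then ⟨m.1, hm⟩ else ⟨0, by omega⟩
    have h1 := h.2 f (fun _ => Finset.mem_univ _) (.atom R (Fin.castLE (H.har R)))
    have hf : ∀ i, f (Fin.castLE (H.har R) i) = i := by
      intro i
      simp [f]
    simp only [LTerm.eval, hf] at h1
    by_cases h2 : u ∈ AA.rel R <;> by_cases h3 : w ∈ BB.rel R <;> simp [h2, h3] at h1 ⊢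

/-- The type of classes of tuples. -/
abbrev Cl (σ : Type) (ar : σ → ℕ) (k : ℕ) (N : Type) : Type :=
  Set (N × N) × ((Fin k → N) → LTerm σ ar k → ℕ)

/-- The class of a tuple. -/
def cl (k : ℕ) (AA : Struct σ ar A) {N : Type} (v : N → A) : Cl σ ar k N :=
  ({p | v p.1 = v p.2}, fun f t => t.eval AA (fun i => v (f i)))

lemma cl_eq_iff {N : Type} [Fintype N] {v : N → A} {w : N → B} :
    cl k AA v = cl k BB w ↔ SimOn k AA BB Finset.univ v w := by
  unfold cl SimOn
  rw [Prod.mk.injEq, Set.ext_iff]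
  constructor
  · rintro ⟨h1, h2⟩
    exact ⟨fun s _ s' _ => h1 (s, s'), fun f _ t => congrFun (congrFun h2 f) t⟩
  · rintro ⟨h1, h2⟩
    exact ⟨fun x => h1 x.1 (Finset.mem_univ _) x.2 (Finset.mem_univ _),
      funext fun f => funext fun t => h2 f (fun _ => Finset.mem_univ _) t⟩

lemma cl_comp {N M : Type} [Fintype N] [Fintype M] {v : N → A} {w : N → B}
    (h : cl k AA v = cl k BB w) (g : M → N) : cl k AA (v ∘ g) = cl k BB (w ∘ g) := by
  rw [cl_eq_iff] at h ⊢
  exact ⟨fun s _ s' _ => h.1 _ (Finset.mem_univ _) _ (Finset.mem_univ _),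
    fun f _ t => h.2 (g ∘ f) (fun _ => Finset.mem_univ _) t⟩

lemma factor_iff {N M Z : Type} [Nonempty M] (g : M → N) (v : M → Z) :
    (∃ u : N → Z, u ∘ g = v) ↔ ∀ m m', g m = g m' → v m = v m' := by
  constructor
  · rintro ⟨u, rfl⟩ m m' h
    simp [h]
  · intro h
    obtain ⟨m₀⟩ := ‹Nonempty M›
    refine ⟨fun n => if hn : ∃ m, g m = n then v hn.choose else v m₀, ?_⟩
    funext m
    have hn : ∃ m', g m' = g m := ⟨m, rfl⟩
    simp only [Function.comp, dif_pos hn]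
    exact h _ _ hn.choose_spec

lemma Hyp.main_equiv (H : Hyp k AA BB) {N M : Type} [Fintype N] [Fintype M] [Nonempty M]
    (hN : Fintype.card N ≤ k) (g : M → N) (v : M → A) (w : M → B) (h : cl k AA v = cl k BB w) :
    ∃ Φ : {u : N → A // u ∘ g = v} ≃ {u : N → B // u ∘ g = w},
      ∀ u, cl k AA u.1 = cl k BB (Φ u).1 := by
  rw [cl_eq_iff] at h
  have hiff : (∃ u : N → A, u ∘ g = v) ↔ (∃ u : N → B, u ∘ g = w) := by
    rw [factor_iff, factor_iff]
    exact forall_congr' fun m => forall_congr' fun m' => imp_congr_right fun _ =>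
      h.1 m (Finset.mem_univ _) m' (Finset.mem_univ _)
  by_cases hu : ∃ u : N → A, u ∘ g = v
  · obtain ⟨w₀, hw₀⟩ := hiff.1 hu
    obtain ⟨u₀, hu₀⟩ := hu
    subst hu₀ hw₀
    have hs : SimOn k AA BB (Finset.univ.image g) u₀ w₀ := by
      constructor
      · intro s hs s' hs'
        obtain ⟨m, -, rfl⟩ := Finset.mem_image.1 hs
        obtain ⟨m', -, rfl⟩ := Finset.mem_image.1 hs'
        exact h.1 m (Finset.mem_univ _) m' (Finset.mem_univ _)
      · intro f hf t
        choose m hm using fun i => Finset.mem_image.1 (hf i)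
        have := h.2 m (fun _ => Finset.mem_univ _) t
        simpa only [Function.comp, hm] using this
    obtain ⟨Φ, hΦ⟩ := sim_extend_all AA BB H.hk H.hce hN _ _ rfl u₀ w₀ hs
    have hi : ∀ (Z : Type) (u u₀ : N → Z), u ∘ g = u₀ ∘ g ↔ ∀ i ∈ Finset.univ.image g, u i = u₀ i := by
      intro Z u u₀
      simp [funext_iff]
    refine ⟨(Equiv.subtypeEquivRight fun u => hi A u u₀).trans
      (Φ.trans (Equiv.subtypeEquivRight fun u => (hi B u w₀).symm)), fun u => ?_⟩
    rw [cl_eq_iff]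
    exact hΦ ⟨u.1, (hi A u.1 u₀).1 u.2⟩
  · have h1 : IsEmpty {u : N → A // u ∘ g = v} := ⟨fun u => hu ⟨u.1, u.2⟩⟩
    have h2 : IsEmpty {u : N → B // u ∘ g = w} := ⟨fun u => hu (hiff.2 ⟨u.1, u.2⟩)⟩
    exact ⟨Equiv.equivOfIsEmpty _ _, fun u => (h1.false u).elim⟩

lemma Hyp.full_equiv (H : Hyp k AA BB) {N : Type} [Fintype N] (hN : Fintype.card N ≤ k) :
    ∃ Φ : (N → A) ≃ (N → B), ∀ u, cl k AA u = cl k BB (Φ u) := by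
  have hcard := H.hce .one
  simp only [LTerm.eval, Finset.sum_const, Finset.card_univ, smul_eq_mul, mul_one] at hcard
  have E : (N → A) ≃ (N → B) := Equiv.arrowCongr (Equiv.refl _) (Fintype.equivOfCardEq hcard)
  by_cases hne : Nonempty (N → A)
  · obtain ⟨v⟩ := hne
    have hs : SimOn k AA BB ∅ v (E v) := by
      refine ⟨by simp, fun f hf => ?_⟩
      exact (Finset.notMem_empty _ (hf ⟨0, H.hk⟩)).elim
    obtain ⟨Φ, hΦ⟩ := sim_extend_all AA BB H.hk H.hce hN _ _ rfl v (E v) hs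
    refine ⟨(Equiv.subtypeUnivEquiv (by simp)).symm.trans (Φ.trans (Equiv.subtypeUnivEquiv (by simp))),
      fun u => ?_⟩
    rw [cl_eq_iff]
    exact hΦ ⟨u, by simp⟩
  · exact ⟨E, fun u => (hne ⟨u⟩).elim⟩

/-- Index set for the classes of the star structures. -/
abbrev PI (σ : Type) (ar : σ → ℕ) (k : ℕ) : Type :=
  (Σ j : Fin k, Cl σ ar k (Fin (j.1 + 1))) ⊕ (Σ R : σ, Cl σ ar k (Fin (ar R)))

/-- The class of an element of the star structure. -/
def pcl (AA : Struct σ ar A) : StarUniv AA k → PI σ ar k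
  | .inl x => .inl ⟨x.1, cl k AA x.2⟩
  | .inr c => .inr ⟨c.1, cl k AA c.2.1⟩

lemma pcl_inl {j : Fin k} {v : Fin (j.1 + 1) → A} {y : StarUniv BB k}
    (h : pcl (k := k) AA (.inl ⟨j, v⟩) = pcl BB y) : ∃ w, y = .inl ⟨j, w⟩ ∧ cl k AA v = cl k BB w := by
  rcases y with ⟨j', w⟩ | c
  · simp only [pcl, Sum.inl.injEq] at h
    have h1 : j = j' := congrArg Sigma.fst h
    subst h1
    exact ⟨w, rfl, eq_of_heq (Sigma.mk.inj h).2⟩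
  · simp [pcl] at h

lemma pcl_inr {R : σ} {v : Fin (ar R) → A} {hv : v ∈ AA.rel R} {y : StarUniv BB k}
    (h : pcl (k := k) AA (.inr ⟨R, v, hv⟩) = pcl BB y) :
    ∃ w hw, y = .inr ⟨R, w, hw⟩ ∧ cl k AA v = cl k BB w := by
  rcases y with x | ⟨R', w, hw⟩
  · simp [pcl] at h
  · simp only [pcl, Sum.inr.injEq] at h
    have h1 : R = R' := congrArg Sigma.fst h
    subst h1
    exact ⟨w, hw, rfl, eq_of_heq (Sigma.mk.inj h).2⟩

lemma pcl_inl_eq {j : Fin k} {v : Fin (j.1 + 1) → A} {w : Fin (j.1 + 1) → B}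
    (h : cl k AA v = cl k BB w) :
    pcl (k := k) AA (.inl ⟨j, v⟩) = pcl (k := k) BB (.inl ⟨j, w⟩) := by
  simp only [pcl, h]

lemma Hyp.p_equiv (H : Hyp k AA BB) :
    ∃ e : StarUniv AA k ≃ StarUniv BB k, ∀ x, pcl BB (e x) = pcl AA x := by
  choose Φ hΦ using fun j : Fin k => H.full_equiv (N := Fin (j.1 + 1))
    (by rw [Fintype.card_fin]; omega)
  choose Ψ hΨ using fun R : σ => H.full_equiv (N := Fin (ar R))
    (by rw [Fintype.card_fin]; exact H.har R)
  let e₁ : ((j : Fin k) × (Fin (j.1 + 1) → A)) ≃ ((j : Fin k) × (Fin (j.1 + 1) → B)) :=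
    Equiv.sigmaCongrRight Φ
  let e₂ : Cons AA ≃ Cons BB := Equiv.sigmaCongrRight fun R =>
    (Ψ R).subtypeEquiv fun u => H.rel_iff R (cl_eq_iff.1 (hΨ R u))
  refine ⟨Equiv.sumCongr e₁ e₂, ?_⟩
  rintro (⟨j, v⟩ | ⟨R, v, hv⟩)
  · exact (pcl_inl_eq (hΦ j v)).symm
  · exact congrArg (fun x : Cl σ ar k (Fin (ar R)) => (Sum.inr ⟨R, x⟩ : PI σ ar k)) (hΨ R v).symm

lemma starAr_pos (s : StarSym σ ar k) : 0 < starAr s := by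
  cases s <;> simp [starAr]

lemma starAr_le (s : StarSym σ ar k) : starAr s ≤ 2 := by
  cases s <;> simp [starAr]

/-- The first position. -/
def z (s : StarSym σ ar k) : Fin (starAr s) := ⟨0, starAr_pos s⟩

/-- The class of a constraint of the star structure. -/
def qcl (AA : Struct σ ar A) (c : Cons (starStruct AA k)) : StarSym σ ar k × PI σ ar k :=
  (c.1, pcl AA (c.2.1 (z c.1)))

lemma star_L1 (s : StarSym σ ar k) {u u' : Fin (starAr s) → StarUniv AA k}
    (hu : u ∈ (starStruct AA k).rel s) (hu' : u' ∈ (starStruct AA k).rel s) (h : u (z s) = u' (z s)) :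
    u = u' := by
  cases s with
  | TS j S =>
    obtain ⟨v, -, rfl⟩ := hu
    obtain ⟨v', -, rfl⟩ := hu'
    exact funext fun _ => h
  | RS R S =>
    obtain ⟨v, hv, -, rfl⟩ := hu
    obtain ⟨v', hv', -, rfl⟩ := hu'
    exact funext fun _ => h
  | TI j j' iv =>
    obtain ⟨v, rfl⟩ := hu
    obtain ⟨v', rfl⟩ := hu'
    have h1 := Sum.inl_injective h
    have h2 := eq_of_heq (Sigma.mk.inj h1).2
    rw [h2]
  | RI R j iv =>
    obtain ⟨v, hv, rfl⟩ := hu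
    obtain ⟨v', hv', rfl⟩ := hu'
    have h1 := Sum.inr_injective h
    have h2 := congrArg Subtype.val (eq_of_heq (Sigma.mk.inj h1).2)
    change v = v' at h2
    subst h2
    rfl

lemma pair_aux {X Y I : Type} (p : X → I) (q : Y → I) (a b : X) (a' b' : Y) (ha : p a = q a')
    (hb : p b = q b') (hab : a = b ↔ a' = b') :
    (∀ s : Fin 2, p (![a, b] s) = q (![a', b'] s)) ∧
    ∀ s s' : Fin 2, ![a, b] s = ![a, b] s' ↔ ![a', b'] s = ![a', b'] s' := by
  refine ⟨?_, ?_⟩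
  · intro s
    fin_cases s
    · exact ha
    · exact hb
  · intro s s'
    fin_cases s <;> fin_cases s'
    · simp
    · exact hab
    · exact eq_comm.trans (hab.trans eq_comm)
    · simp

lemma star_L2 (s : StarSym σ ar k) {u : Fin (starAr s) → StarUniv AA k}
    (hu : u ∈ (starStruct AA k).rel s) {y : StarUniv BB k} (h : pcl AA (u (z s)) = pcl BB y) :
    ∃ u' ∈ (starStruct BB k).rel s, u' (z s) = y ∧ (∀ i, pcl AA (u i) = pcl BB (u' i)) ∧
      ∀ i i', u i = u i' ↔ u' i = u' i' := by
  cases s with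
  | TS j S =>
    obtain ⟨v, hv, rfl⟩ := hu
    obtain ⟨w, rfl, hw⟩ := pcl_inl h
    refine ⟨fun _ => .inl ⟨j, w⟩, ⟨w, ?_, rfl⟩, rfl, fun _ => h, fun _ _ => iff_of_true rfl rfl⟩
    rw [cl_eq_iff] at hw
    intro i hi i' hi'
    exact (hw.1 i (Finset.mem_univ _) i' (Finset.mem_univ _)).1 (hv i hi i' hi')
  | RS R S =>
    obtain ⟨v, hv, hS, rfl⟩ := hu
    obtain ⟨w, hwB, rfl, hw⟩ := pcl_inr h
    refine ⟨fun _ => .inr ⟨R, w, hwB⟩, ⟨w, hwB, ?_, rfl⟩, rfl, fun _ => h, fun _ _ => iff_of_true rfl rfl⟩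
    rw [cl_eq_iff] at hw
    intro i hi i' hi'
    exact (hw.1 i (Finset.mem_univ _) i' (Finset.mem_univ _)).1 (hS i hi i' hi')
  | TI j j' iv =>
    obtain ⟨v, rfl⟩ := hu
    obtain ⟨w, rfl, hw⟩ := pcl_inl h
    have h1 : (Sum.inl ⟨j, v⟩ : StarUniv AA k) = Sum.inl ⟨j', v ∘ iv⟩ ↔
        (Sum.inl ⟨j, w⟩ : StarUniv BB k) = Sum.inl ⟨j', w ∘ iv⟩ := by
      by_cases hj : j = j'
      · subst hj
        have h2 : v = v ∘ iv ↔ w = w ∘ iv := by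
          rw [cl_eq_iff] at hw
          rw [funext_iff, funext_iff]
          exact forall_congr' fun i => hw.1 _ (Finset.mem_univ _) _ (Finset.mem_univ _)
        constructor
        · intro h3
          have h4 := h2.1 (eq_of_heq (Sigma.mk.inj (Sum.inl_injective h3)).2)
          rw [← h4]
        · intro h3
          have h4 := h2.2 (eq_of_heq (Sigma.mk.inj (Sum.inl_injective h3)).2)
          rw [← h4]
      · exact iff_of_false (fun h3 => hj (congrArg Sigma.fst (Sum.inl_injective h3)))
          (fun h3 => hj (congrArg Sigma.fst (Sum.inl_injective h3)))
    obtain ⟨h2, h3⟩ := pair_aux (pcl AA) (pcl BB) _ _ _ _ h (pcl_inl_eq (cl_comp hw iv)) h1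
    exact ⟨![Sum.inl ⟨j, w⟩, Sum.inl ⟨j', w ∘ iv⟩], ⟨w, rfl⟩, rfl, h2, h3⟩
  | RI R j iv =>
    obtain ⟨v, hv, rfl⟩ := hu
    obtain ⟨w, hwB, rfl, hw⟩ := pcl_inr h
    have h1 : (Sum.inr ⟨R, v, hv⟩ : StarUniv AA k) = Sum.inl ⟨j, v ∘ iv⟩ ↔
        (Sum.inr ⟨R, w, hwB⟩ : StarUniv BB k) = Sum.inl ⟨j, w ∘ iv⟩ :=
      iff_of_false (fun h => by cases h) (fun h => by cases h)
    obtain ⟨h2, h3⟩ := pair_aux (pcl AA) (pcl BB) _ _ _ _ h (pcl_inl_eq (cl_comp hw iv)) h1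
    exact ⟨![Sum.inr ⟨R, w, hwB⟩, Sum.inl ⟨j, w ∘ iv⟩], ⟨w, hwB, rfl⟩, rfl, h2, h3⟩

/-- `x` is the first coordinate of a constraint all of whose other coordinates are `a`. -/
def MM (AA : Struct σ ar A) (s : StarSym σ ar k) (a x : StarUniv AA k) : Prop :=
  ∃ u ∈ (starStruct AA k).rel s, u (z s) = x ∧ ∀ i, i ≠ z s → u i = a

lemma refine_equiv {X Y I : Type} [Finite X] [Finite Y] (p : X → I) (q : Y → I) (e : X ≃ Y)
    (he : ∀ x, q (e x) = p x) (M : X → Prop) (M' : Y → Prop) (E : {x // M x} ≃ {y // M' y})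
    (hE : ∀ x, q (E x).1 = p x.1) :
    ∃ e' : X ≃ Y, ∀ x, q (e' x) = p x ∧ (M x ↔ M' (e' x)) := by
  have h1 : ∀ i, Nat.card {x // p x = i ∧ M x} = Nat.card {y // q y = i ∧ M' y} := by
    intro i
    have h2 : Nat.card {x : {x // M x} // p x.1 = i} = Nat.card {y : {y // M' y} // q y.1 = i} :=
      card_fiber_eq_of_equiv (fun x : {x // M x} => p x.1) (fun y : {y // M' y} => q y.1) E hE i
    rw [Nat.card_congr (Equiv.subtypeSubtypeEquivSubtypeInter M (fun x => p x = i)),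
      Nat.card_congr (Equiv.subtypeSubtypeEquivSubtypeInter M' (fun x => q x = i))] at h2
    simpa only [and_comm] using h2
  have h3 := card_fiber_eq_of_equiv p q e he
  have hsplit : ∀ (Z : Type) [Finite Z] (P M : Z → Prop),
      Nat.card {x // P x} = Nat.card {x // P x ∧ M x} + Nat.card {x // P x ∧ ¬ M x} := by
    intro Z _ P M
    rw [← Nat.card_congr (Equiv.subtypeSubtypeEquivSubtypeInter P M),
      ← Nat.card_congr (Equiv.subtypeSubtypeEquivSubtypeInter P (fun x => ¬ M x)), ← Nat.card_sum]
    exact Nat.card_congr (Equiv.sumCompl (fun x : {x // P x} => M x.1)).symm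
  obtain ⟨e', he'⟩ := exists_equiv_of_fibers (fun x => (p x, M x)) (fun y => (q y, M' y)) (by
    rintro ⟨i, P⟩
    simp only [Prod.mk.injEq, eq_iff_iff]
    by_cases hP : P
    · simpa only [hP, iff_true] using h1 i
    · simp only [hP, iff_false]
      have h4 := hsplit X (fun x => p x = i) M
      have h5 := hsplit Y (fun x => q x = i) M'
      have h6 := h1 i
      have h7 := h3 i
      omega)
  refine ⟨e', fun x => ?_⟩
  have := he' x
  simp only [Prod.mk.injEq, eq_iff_iff] at this
  exact ⟨this.1, this.2.symm⟩

lemma MM_unary (s : StarSym σ ar k) (hs : starAr s = 1) (a : StarUniv AA k) (b : StarUniv BB k)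
    {x : StarUniv AA k} {y : StarUniv BB k} (h : pcl AA x = pcl BB y) (hx : MM AA s a x) :
    MM BB s b y := by
  obtain ⟨u, hu, rfl, -⟩ := hx
  obtain ⟨u', hu', h1, -⟩ := star_L2 s hu h
  refine ⟨u', hu', h1, fun i hi => (hi ?_).elim⟩
  have := i.2
  exact Fin.ext (by simp only [z]; omega)

lemma MM_self (s : StarSym σ ar k) {a : StarUniv AA k} {b : StarUniv BB k}
    (h : pcl AA a = pcl BB b) (hx : MM AA s a a) : MM BB s b b := by
  obtain ⟨u, hu, h0, h1⟩ := hx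
  obtain ⟨u', hu', h2, h3, h4⟩ := star_L2 s hu (h0.symm ▸ h)
  refine ⟨u', hu', h2, fun i hi => ?_⟩
  rw [← h2, ← h4, h1 i hi, h0]

lemma MM_TI (AA : Struct σ ar A) (j j' : Fin k) (iv : Fin (j'.1 + 1) → Fin (j.1 + 1))
    (a x : StarUniv AA k) :
    MM AA (.TI j j' iv) a x ↔ ∃ v, x = .inl ⟨j, v⟩ ∧ .inl ⟨j', v ∘ iv⟩ = a := by
  constructor
  · rintro ⟨u, ⟨v, rfl⟩, h1, h2⟩
    refine ⟨v, h1.symm, h2 (1 : Fin 2) ?_⟩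
    intro h
    exact absurd (congrArg Fin.val h) (by simp [z])
  · rintro ⟨v, rfl, rfl⟩
    refine ⟨![.inl ⟨j, v⟩, .inl ⟨j', v ∘ iv⟩], ⟨v, rfl⟩, rfl, fun i hi => ?_⟩
    change Fin 2 at i
    fin_cases i
    · exact (hi rfl).elim
    · rfl

lemma MM_RI (AA : Struct σ ar A) (R : σ) (j : Fin k) (iv : Fin (j.1 + 1) → Fin (ar R))
    (a x : StarUniv AA k) :
    MM AA (.RI R j iv) a x ↔ ∃ v hv, x = .inr ⟨R, v, hv⟩ ∧ .inl ⟨j, v ∘ iv⟩ = a := by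
  constructor
  · rintro ⟨u, ⟨v, hv, rfl⟩, h1, h2⟩
    refine ⟨v, hv, h1.symm, h2 (1 : Fin 2) ?_⟩
    intro h
    exact absurd (congrArg Fin.val h) (by simp [z])
  · rintro ⟨v, hv, rfl, rfl⟩
    refine ⟨![.inr ⟨R, v, hv⟩, .inl ⟨j, v ∘ iv⟩], ⟨v, hv, rfl⟩, rfl, fun i hi => ?_⟩
    change Fin 2 at i
    fin_cases i
    · exact (hi rfl).elim
    · rfl

lemma TI_equiv (AA : Struct σ ar A) (j j' : Fin k) (iv : Fin (j'.1 + 1) → Fin (j.1 + 1))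
    (v₀ : Fin (j'.1 + 1) → A) :
    ∃ E : {u : Fin (j.1 + 1) → A // u ∘ iv = v₀} ≃
        {x : StarUniv AA k // MM AA (.TI j j' iv) (.inl ⟨j', v₀⟩) x},
      ∀ u, (E u).1 = .inl ⟨j, u.1⟩ := by
  refine ⟨Equiv.ofBijective (fun u => ⟨.inl ⟨j, u.1⟩, (MM_TI AA j j' iv _ _).2
    ⟨u.1, rfl, by rw [u.2]⟩⟩) ⟨?_, ?_⟩, fun _ => rfl⟩
  · intro u u' h
    have h1 := Sum.inl_injective (congrArg Subtype.val h)
    exact Subtype.ext (eq_of_heq (Sigma.mk.inj h1).2)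
  · rintro ⟨x, hx⟩
    obtain ⟨v, rfl, hv⟩ := (MM_TI AA j j' iv _ _).1 hx
    exact ⟨⟨v, eq_of_heq (Sigma.mk.inj (Sum.inl_injective hv)).2⟩, rfl⟩

lemma RI_equiv (AA : Struct σ ar A) (R : σ) (j' : Fin k) (iv : Fin (j'.1 + 1) → Fin (ar R))
    (v₀ : Fin (j'.1 + 1) → A) :
    ∃ E : {u : {u : Fin (ar R) → A // u ∘ iv = v₀} // u.1 ∈ AA.rel R} ≃
        {x : StarUniv AA k // MM AA (.RI R j' iv) (.inl ⟨j', v₀⟩) x},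
      ∀ u, (E u).1 = .inr ⟨R, u.1.1, u.2⟩ := by
  refine ⟨Equiv.ofBijective (fun u => ⟨.inr ⟨R, u.1.1, u.2⟩, (MM_RI AA R j' iv _ _).2
    ⟨u.1.1, u.2, rfl, by rw [u.1.2]⟩⟩) ⟨?_, ?_⟩, fun _ => rfl⟩
  · intro u u' h
    have h1 := Sum.inr_injective (congrArg Subtype.val h)
    have h2 := congrArg Subtype.val (eq_of_heq (Sigma.mk.inj h1).2)
    exact Subtype.ext (Subtype.ext h2)
  · rintro ⟨x, hx⟩
    obtain ⟨v, hvR, rfl, hv⟩ := (MM_RI AA R j' iv _ _).1 hx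
    exact ⟨⟨⟨v, eq_of_heq (Sigma.mk.inj (Sum.inl_injective hv)).2⟩, hvR⟩, rfl⟩

lemma Hyp.MM_equiv (H : Hyp k AA BB) (s : StarSym σ ar k) {a : StarUniv AA k} {b : StarUniv BB k}
    (hab : pcl AA a = pcl BB b) :
    ∃ E : {x // MM AA s a x} ≃ {y // MM BB s b y}, ∀ x, pcl BB (E x).1 = pcl AA x.1 := by
  obtain ⟨e, he⟩ := H.p_equiv
  -- the case in which both sides are empty
  have hempty : (∀ x, ¬ MM AA s a x) → (∀ y, ¬ MM BB s b y) →
      ∃ E : {x // MM AA s a x} ≃ {y // MM BB s b y}, ∀ x, pcl BB (E x).1 = pcl AA x.1 := by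
    intro h1 h2
    have : IsEmpty {x // MM AA s a x} := ⟨fun x => h1 _ x.2⟩
    have : IsEmpty {x // MM BB s b x} := ⟨fun x => h2 _ x.2⟩
    exact ⟨Equiv.equivOfIsEmpty _ _, fun x => (h1 _ x.2).elim⟩
  have hunary : starAr s = 1 →
      ∃ E : {x // MM AA s a x} ≃ {y // MM BB s b y}, ∀ x, pcl BB (E x).1 = pcl AA x.1 := by
    intro hs
    exact ⟨e.subtypeEquiv fun x => ⟨MM_unary s hs a b (he x).symm, MM_unary s hs b a (he x)⟩,
      fun x => he x.1⟩
  cases s with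
  | TS j S => exact hunary rfl
  | RS R S => exact hunary rfl
  | TI j j' iv =>
    by_cases ha : ∃ v, a = .inl ⟨j', v⟩
    · obtain ⟨v, rfl⟩ := ha
      obtain ⟨w, rfl, hvw⟩ := pcl_inl hab
      obtain ⟨Φ, hΦ⟩ := H.main_equiv (N := Fin (j.1 + 1)) (by rw [Fintype.card_fin]; omega) iv v w hvw
      obtain ⟨EA, hEA⟩ := TI_equiv AA j j' iv v
      obtain ⟨EB, hEB⟩ := TI_equiv BB j j' iv w
      refine ⟨EA.symm.trans (Φ.trans EB), fun x => ?_⟩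
      obtain ⟨u, rfl⟩ := EA.surjective x
      simp only [Equiv.trans_apply, Equiv.symm_apply_apply]
      rw [hEA, hEB]
      exact (pcl_inl_eq (hΦ u)).symm
    · refine hempty ?_ ?_
      · intro x hx
        obtain ⟨v, -, h⟩ := (MM_TI AA j j' iv _ _).1 hx
        exact ha ⟨_, h.symm⟩
      · intro y hy
        obtain ⟨v, -, rfl⟩ := (MM_TI BB j j' iv _ _).1 hy
        obtain ⟨v', h, -⟩ := pcl_inl hab.symm
        exact ha ⟨_, h⟩
  | RI R j' iv =>
    by_cases ha : ∃ v, a = .inl ⟨j', v⟩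
    · obtain ⟨v, rfl⟩ := ha
      obtain ⟨w, rfl, hvw⟩ := pcl_inl hab
      obtain ⟨Φ, hΦ⟩ := H.main_equiv (N := Fin (ar R))
        (by rw [Fintype.card_fin]; exact H.har R) iv v w hvw
      obtain ⟨EA, hEA⟩ := RI_equiv AA R j' iv v
      obtain ⟨EB, hEB⟩ := RI_equiv BB R j' iv w
      refine ⟨EA.symm.trans ((Φ.subtypeEquiv (fun u => H.rel_iff R (cl_eq_iff.1 (hΦ u)))).trans EB),
        fun x => ?_⟩
      obtain ⟨u, rfl⟩ := EA.surjective x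
      simp only [Equiv.trans_apply, Equiv.symm_apply_apply]
      rw [hEA, hEB]
      exact congrArg (fun x : Cl σ ar k (Fin (ar R)) => (Sum.inr ⟨R, x⟩ : PI σ ar k)) (hΦ u.1).symm
    · refine hempty ?_ ?_
      · intro x hx
        obtain ⟨v, hv, -, h⟩ := (MM_RI AA R j' iv _ _).1 hx
        exact ha ⟨_, h.symm⟩
      · intro y hy
        obtain ⟨v, hv, -, rfl⟩ := (MM_RI BB R j' iv _ _).1 hy
        obtain ⟨v', h, -⟩ := pcl_inl hab.symm
        exact ha ⟨_, h⟩

lemma Hyp.exists_ref (H : Hyp k AA BB) (s : StarSym σ ar k) {a : StarUniv AA k} {b : StarUniv BB k}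
    (hab : pcl AA a = pcl BB b) :
    ∃ e : StarUniv AA k ≃ StarUniv BB k, (∀ x, pcl BB (e x) = pcl AA x) ∧ e a = b ∧
      ∀ x, MM AA s a x ↔ MM BB s b (e x) := by
  obtain ⟨e, he⟩ := H.p_equiv
  obtain ⟨E, hE⟩ := H.MM_equiv s hab
  obtain ⟨e', he'⟩ := refine_equiv _ _ e he _ _ E hE
  obtain ⟨e'', h1, h2⟩ := equiv_fix (fun x => (pcl AA x, MM AA s a x))
    (fun y => (pcl BB y, MM BB s b y)) e' (fun x => by
      rw [(he' x).1, propext (he' x).2]) (fun _ : Unit => a) (fun _ => b) Finset.univ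
      (fun _ _ => by
        rw [hab, propext (⟨MM_self s hab, MM_self s hab.symm⟩ : MM AA s a a ↔ MM BB s b b)])
      (fun _ _ _ _ => by simp)
  refine ⟨e'', fun x => congrArg Prod.fst (h1 x), h2 () (Finset.mem_univ _), fun x => ?_⟩
  have h3 : MM BB s b (e'' x) = MM AA s a x := congrArg Prod.snd (h1 x)
  rw [h3]

lemma cons_equiv (e : StarUniv AA k ≃ StarUniv BB k) (he : ∀ x, pcl BB (e x) = pcl AA x) :
    ∃ Ψ : Cons (starStruct AA k) ≃ Cons (starStruct BB k),
      ∀ s u hu, ∃ u' hu', Ψ ⟨s, u, hu⟩ = ⟨s, u', hu'⟩ ∧ u' (z s) = e (u (z s)) := by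
  choose F hF hF0 _ using fun (c : Cons (starStruct AA k)) =>
    star_L2 c.1 c.2.2 (he (c.2.1 (z c.1))).symm
  refine ⟨Equiv.ofBijective (fun c => ⟨c.1, F c, hF c⟩) ⟨?_, ?_⟩, fun s u hu =>
    ⟨F ⟨s, u, hu⟩, hF ⟨s, u, hu⟩, rfl, hF0 ⟨s, u, hu⟩⟩⟩
  · rintro ⟨s, u, hu⟩ ⟨s', u', hu'⟩ h
    have hs : s = s' := congrArg Sigma.fst h
    subst hs
    have h1 := congrArg Subtype.val (eq_of_heq (Sigma.mk.inj h).2)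
    have h2 := congrFun h1 (z s)
    have h3 := (hF0 ⟨s, u, hu⟩).symm.trans (h2.trans (hF0 ⟨s, u', hu'⟩))
    have h4 := star_L1 s hu hu' (e.injective h3)
    subst h4
    rfl
  · rintro ⟨s, w, hw⟩
    obtain ⟨u, hu, h1, -⟩ := star_L2 (BB := AA) s hw (y := e.symm (w (z s)))
      (by rw [← he, e.apply_symm_apply])
    refine ⟨⟨s, u, hu⟩, ?_⟩
    have h2 : F ⟨s, u, hu⟩ = w := by
      refine star_L1 s (hF ⟨s, u, hu⟩) hw ?_
      refine (hF0 ⟨s, u, hu⟩).trans ?_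
      change e (u (z s)) = w (z s)
      rw [h1, e.apply_symm_apply]
    exact congrArg (Sigma.mk s) (Subtype.ext h2)

lemma Hyp.ce (H : Hyp k AA BB) :
    CE (starStruct AA k) (starStruct BB k) (pcl AA) (qcl AA) (pcl BB) (qcl BB) := by
  have hq : ∀ (e : StarUniv AA k ≃ StarUniv BB k) (_ : ∀ x, pcl BB (e x) = pcl AA x)
      (Ψ : Cons (starStruct AA k) ≃ Cons (starStruct BB k))
      (_ : ∀ s u hu, ∃ u' hu', Ψ ⟨s, u, hu⟩ = ⟨s, u', hu'⟩ ∧ u' (z s) = e (u (z s))) (c),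
      qcl BB (Ψ c) = qcl AA c := by
    rintro e he Ψ hΨ ⟨s, u, hu⟩
    obtain ⟨u', hu', h1, h2⟩ := hΨ s u hu
    rw [h1]
    unfold qcl
    simp only [h2, he]
  constructor
  · intro a b hab ℓ j
    obtain ⟨e, he, heab, hM⟩ := H.exists_ref ℓ.1 hab
    obtain ⟨Ψ, hΨ⟩ := cons_equiv e he
    refine Nat.card_congr (Ψ.subtypeEquiv fun c => ?_)
    rw [hq e he Ψ hΨ]
    refine and_congr_right fun _ => ?_
    obtain ⟨s, u, hu⟩ := c
    obtain ⟨u', hu', h1, h2⟩ := hΨ s u hu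
    rw [h1]
    by_cases hs : s = ℓ.1
    · have hMM : ∀ {Z : Type} [Fintype Z] (ZZ : Struct σ ar Z) (u : Fin (starAr s) → StarUniv ZZ k)
          (_ : u ∈ (starStruct ZZ k).rel s) (a : StarUniv ZZ k) (i) (_ : i ≠ z s),
          MM ZZ s a (u (z s)) ↔ u i = a := by
        intro Z _ ZZ u hu a i hi
        constructor
        · rintro ⟨v, hv, h3, h4⟩
          rw [← star_L1 s hv hu h3]
          exact h4 i hi
        · intro h3
          refine ⟨u, hu, rfl, fun i' hi' => ?_⟩
          have : i' = i := by
            have h5 := starAr_le s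
            have h6 : i.1 ≠ 0 := fun h => hi (Fin.ext h)
            have h7 : i'.1 ≠ 0 := fun h => hi' (Fin.ext h)
            have h8 := i.2
            have h9 := i'.2
            exact Fin.ext (by omega)
          rw [this, h3]
      have h3 : lab (starStruct AA k) a ⟨s, u, hu⟩ = lab (starStruct BB k) b ⟨s, u', hu'⟩ := by
        rw [lab_eq_iff]
        intro i
        by_cases hi : i = z s
        · rw [hi, h2, ← heab, e.apply_eq_iff_eq]
        · rw [← hMM AA u hu a i hi, ← hMM BB u' hu' b i hi, h2]
          have hM' : ∀ x, MM AA s a x ↔ MM BB s b (e x) := by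
            rw [hs]
            exact hM
          exact hM' _
      rw [h3]
    · exact iff_of_false (fun h => hs (congrArg Sigma.fst h)) (fun h => hs (congrArg Sigma.fst h))
  · rintro ⟨s, u, hu⟩ ⟨s', u', hu'⟩ hqq ℓ i
    have hs : s = s' := congrArg Prod.fst hqq
    subst hs
    have h0 : pcl AA (u (z s)) = pcl BB (u' (z s)) := congrArg Prod.snd hqq
    obtain ⟨u'', hu'', h1, h2, h3⟩ := star_L2 s hu h0
    have h4 := star_L1 s hu'' hu' h1
    subst h4
    obtain ⟨e, he⟩ := H.p_equiv
    obtain ⟨e', he', hfix⟩ := equiv_fix (pcl AA) (pcl BB) e he u u'' Finset.univ (fun i _ => h2 i)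
      (fun i _ i' _ => h3 i i')
    refine Nat.card_congr (e'.subtypeEquiv fun x => ?_)
    rw [he']
    have h5 : lab (starStruct AA k) x ⟨s, u, hu⟩ = lab (starStruct BB k) (e' x) ⟨s, u'', hu'⟩ := by
      rw [lab_eq_iff]
      intro i
      rw [← hfix i (Finset.mem_univ _), e'.apply_eq_iff_eq]
    rw [h5]
  · obtain ⟨e, he⟩ := H.p_equiv
    exact card_fiber_eq_of_equiv _ _ e he
  · obtain ⟨e, he⟩ := H.p_equiv
    obtain ⟨Ψ, hΨ⟩ := cons_equiv e he
    exact card_fiber_eq_of_equiv _ _ Ψ (hq e he Ψ hΨ)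

end HomToEquiv

theorem stmt4 [Fintype σ] {A B : Type} [Fintype A] [Fintype B] (k : ℕ) (hk : 1 ≤ k)
    (har : ∀ R : σ, ar R ≤ k) (AA : Struct σ ar A) (BB : Struct σ ar B) :
    EquivK k AA BB ↔
      ∀ (Q : Type) (_ : Fintype Q) (QQ : Struct σ ar Q),
        HasTreewidthLT QQ k → homCount QQ AA = homCount QQ BB := by
  constructor
  · intro h Q _ QQ hQ
    obtain ⟨I, J, pA, qA, pB, qB, hce⟩ := CE.of_commonEquitable h
    exact homCount_eq_of_game hk har hce.isGame QQ hQ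
  · intro h
    exact (Hyp.of_homCount hk har AA BB h).ce.commonEquitable

end
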